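/- arXiv:1111.3095 — 4 statements merged into one kernel-verified Lean document; each statement's English description precedes it below -/
import Mathlib

section
/- (Aronszajn–Krein formula.) For all α, β ∈ ℝ and every z ∈ ℂ∖ℝ, one has (1 + (α − β)·𝒦_{μ_β}(z))·𝒦_{μ_α}(z) = 𝒦_{μ_β}(z). -/
/-!
The operators `A α` are self-adjoint: `A 0` is multiplication by the real function `t`, and
`A α` differs from it by the symmetric rank-one operator `g ↦ α ⟪1, g⟫ 1`. Hence `A α - z` is
invertible for nonreal `z`, so there are `u`, `v` with `(A α - z) u = 1 = (A β - z) v`.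
Since `A β u = A α u - (α - β) ⟪1, u⟫ 1`, both `u` and `(1 - (α - β) ⟪1, u⟫) v` are mapped to
`(1 - (α - β) ⟪1, u⟫) 1` by `A β - z`, so they coincide. Pairing this with `1` gives
`⟪1, u⟫ = (1 - (α - β) ⟪1, u⟫) ⟪1, v⟫`, which is the formula, because the two pairings are the
Cauchy transforms of `μm α` and `μm β` at `z`.
-/

open MeasureTheory Complex Set

local notation "⟪" x ", " y "⟫" => @inner ℂ _ _ x y

/-- A bounded self-adjoint operator minus a nonreal scalar is bijective, as its spectrum is real. -/
lemma bijective_sub_smul_of_isSelfAdjoint {H : Type*} [NormedAddCommGroup H]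
    [InnerProductSpace ℂ H] [CompleteSpace H] {T : H →L[ℂ] H} (hT : IsSelfAdjoint T)
    {z : ℂ} (hz : z.im ≠ 0) : Function.Bijective fun g => T g - z • g := by
  have hmem : z ∉ spectrum ℂ T := fun h => hz (hT.im_eq_zero_of_mem_spectrum h)
  have hu : IsUnit (T - algebraMap ℂ (H →L[ℂ] H) z) := by
    rw [spectrum.notMem_iff] at hmem
    simpa using hmem.neg
  have hb := ContinuousLinearMap.isUnit_iff_bijective.1 hu
  rw [Algebra.algebraMap_eq_smul_one] at hb
  exact hb

/-- A bounded operator acting as multiplication by the real variable is symmetric. -/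
lemma inner_mul_symm {μ : Measure ℝ} {M : Lp ℂ 2 μ →L[ℂ] Lp ℂ 2 μ}
    (hM : ∀ g : Lp ℂ 2 μ, (M g : ℝ → ℂ) =ᵐ[μ] fun t => t * g t) (f g : Lp ℂ 2 μ) :
    ⟪M f, g⟫ = ⟪f, M g⟫ := by
  rw [L2.inner_def, L2.inner_def]
  refine integral_congr_ae ?_
  filter_upwards [hM f, hM g] with t hf hg
  rw [hf, hg]
  simp [RCLike.inner_apply]
  ring

/-- **Aronszajn–Krein formula.** For all `α, β ∈ ℝ` and every nonreal `z`,
`(1 + (α − β)·𝒦_{μ_β}(z))·𝒦_{μ_α}(z) = 𝒦_{μ_β}(z)`. -/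
theorem aronszajn_krein_formula
{μ : Measure ℝ} [IsFiniteMeasure μ]
    (hsupp : ∃ K : Set ℝ, IsCompact K ∧ μ Kᶜ = 0)
    (one : Lp ℂ 2 μ) (hone : (one : ℝ → ℂ) =ᵐ[μ] fun _ => 1)
    (A : ℝ → (Lp ℂ 2 μ →L[ℂ] Lp ℂ 2 μ))
    (hA : ∀ (α : ℝ) (g : Lp ℂ 2 μ),
      (A α g : ℝ → ℂ) =ᵐ[μ] fun t => t * g t + (α : ℂ) * ⟪one, g⟫)
    (μm : ℝ → Measure ℝ)
    (hμm_fin : ∀ α, IsFiniteMeasure (μm α))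
    (hμm0 : μm 0 = μ)
    (hres : ∀ (α : ℝ) (z : ℂ), z.im ≠ 0 → ∀ g : Lp ℂ 2 μ,
      A α g - z • g = one → ⟪one, g⟫ = ∫ t, ((t : ℂ) - z)⁻¹ ∂(μm α))
    (α β : ℝ) (z : ℂ) (hz : z.im ≠ 0) :
    (1 + ((α : ℂ) - (β : ℂ)) * ∫ t, ((t : ℂ) - z)⁻¹ ∂(μm β)) *
        (∫ t, ((t : ℂ) - z)⁻¹ ∂(μm α))
      = ∫ t, ((t : ℂ) - z)⁻¹ ∂(μm β) := by
  have hdiff : ∀ (a b : ℝ) (g : Lp ℂ 2 μ),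
      A a g = A b g + (((a : ℂ) - b) * ⟪one, g⟫) • one := by
    intro a b g
    refine Lp.ext ?_
    filter_upwards [hA a g, hA b g, hone, Lp.coeFn_add (A b g) ((((a : ℂ) - b) * ⟪one, g⟫) • one),
      Lp.coeFn_smul (((a : ℂ) - b) * ⟪one, g⟫) one] with t h1 h2 h3 h4 h5
    rw [h4, Pi.add_apply, h5, Pi.smul_apply, h1, h2, h3, smul_eq_mul]
    ring
  have hself : ∀ a : ℝ, IsSelfAdjoint (A a) := by
    intro a
    rw [ContinuousLinearMap.isSelfAdjoint_iff_isSymmetric]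
    intro f g
    have h0 : ⟪A 0 f, g⟫ = ⟪f, A 0 g⟫ :=
      inner_mul_symm (fun g => by simpa using hA 0 g) f g
    simp only [ContinuousLinearMap.coe_coe]
    rw [hdiff a 0 f, hdiff a 0 g, inner_add_left, inner_add_right, h0, inner_smul_left,
      inner_smul_right]
    simp
    ring
  obtain ⟨u, hu⟩ := (bijective_sub_smul_of_isSelfAdjoint (hself α) hz).2 one
  obtain ⟨v, hv⟩ := (bijective_sub_smul_of_isSelfAdjoint (hself β) hz).2 one
  simp only at hu hv
  have huv : u = (1 - ((α : ℂ) - β) * ⟪one, u⟫) • v := by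
    apply (bijective_sub_smul_of_isSelfAdjoint (hself β) hz).1
    simp only
    rw [map_smul, smul_comm z, ← smul_sub, hv, sub_smul, one_smul]
    rw [hdiff α β u] at hu
    rw [eq_sub_iff_add_eq, sub_add_eq_add_sub]
    exact hu
  have hc := congrArg (fun g => ⟪one, g⟫) huv
  simp only [inner_smul_right] at hc
  rw [← hres α z hz u hu, ← hres β z hz v hv]
  linear_combination hc
end

section
/- (Aronszajn–Donoghue.) For any two coupling constants α, β ∈ ℝ with α ≠ β, the singular parts (μ_α)_s and (μ_β)_s (with respect to Lebesgue measure) are mutually singular measures on ℝ. -/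
/-!
The proof compares boundary values of Borel transforms. Write `F_ν(z) = ∫ (t - z)⁻¹ dν(t)`.

Solving `(A_α - z) g = 1` explicitly by `g(t) = c (t - z)⁻¹`, with `c = (1 + α F_μ(z))⁻¹`, gives the
Aronszajn–Krein formula `F_{μ_α} = F_μ / (1 + α F_μ)` off the real axis (`borel_spectral`); hence
`1 / F_{μ_α} - 1 / F_{μ_β} = α - β` wherever `F_μ ≠ 0`.

On the other hand, the Besicovitch differentiation theorem shows that for `ν_s`-almost every `x` the
ratio `|B(x, r)| / ν_s(B(x, r))` tends to `0` as `r ↓ 0`, and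
`Im F_ν(x + i r) ≥ ν(B(x, r)) / (2 r)`, so `|F_ν(x + i r)| → ∞` (`ae_singularPart_lt_norm_borel`).
If this happened at the same `x` for both `μ_α` and `μ_β`, then the nonzero constant `α - β` would
be a difference of quantities tending to `0`. The singular parts therefore live on disjoint sets.
-/

open MeasureTheory Complex Set

local notation "⟪" x ", " y "⟫" => @inner ℂ _ _ x y

open Filter Topology

/-- The Borel (Cauchy–Stieltjes) transform `z ↦ ∫ (t - z)⁻¹ dν(t)`. -/
noncomputable def borelTransform (ν : Measure ℝ) (z : ℂ) : ℂ := ∫ t, ((t : ℂ) - z)⁻¹ ∂ν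

lemma sub_ne_zero_of_im {z : ℂ} (hz : z.im ≠ 0) (t : ℝ) : (t : ℂ) - z ≠ 0 := by
  intro h
  apply hz
  have := congrArg Complex.im h
  simpa using this

lemma continuous_cauchyKernel {z : ℂ} (hz : z.im ≠ 0) :
    Continuous (fun t : ℝ => ((t : ℂ) - z)⁻¹) :=
  (continuous_ofReal.sub continuous_const).inv₀ (sub_ne_zero_of_im hz)

lemma norm_cauchyKernel_le {z : ℂ} (hz : z.im ≠ 0) (t : ℝ) :
    ‖((t : ℂ) - z)⁻¹‖ ≤ |z.im|⁻¹ := by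
  rw [norm_inv]
  have h := abs_im_le_norm ((t : ℂ) - z)
  simp only [sub_im, ofReal_im, zero_sub, abs_neg] at h
  exact inv_anti₀ (abs_pos.mpr hz) h

lemma memLp_cauchyKernel (ν : Measure ℝ) [IsFiniteMeasure ν] {z : ℂ} (hz : z.im ≠ 0)
    (p : ENNReal) : MemLp (fun t : ℝ => ((t : ℂ) - z)⁻¹) p ν :=
  MemLp.of_bound (continuous_cauchyKernel hz).aestronglyMeasurable _
    (ae_of_all _ (norm_cauchyKernel_le hz))

lemma integrable_cauchyKernel (ν : Measure ℝ) [IsFiniteMeasure ν] {z : ℂ} (hz : z.im ≠ 0) :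
    Integrable (fun t : ℝ => ((t : ℂ) - z)⁻¹) ν :=
  memLp_one_iff_integrable.mp (memLp_cauchyKernel ν hz 1)

lemma im_cauchyKernel (z : ℂ) (t : ℝ) :
    (((t : ℂ) - z)⁻¹).im = z.im * (normSq ((t : ℂ) - z))⁻¹ := by
  simp [inv_im, div_eq_mul_inv]

lemma im_borelTransform (ν : Measure ℝ) [IsFiniteMeasure ν] {z : ℂ} (hz : z.im ≠ 0) :
    (borelTransform ν z).im = z.im * ∫ t, (normSq ((t : ℂ) - z))⁻¹ ∂ν := by
  have h := integral_im (integrable_cauchyKernel ν hz)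
  simp only [RCLike.im_to_complex] at h
  rw [borelTransform, ← h, ← integral_const_mul]
  simp only [im_cauchyKernel]

lemma integrable_normSq (ν : Measure ℝ) [IsFiniteMeasure ν] {z : ℂ} (hz : z.im ≠ 0) :
    Integrable (fun t : ℝ => (normSq ((t : ℂ) - z))⁻¹) ν := by
  have h := ((integrable_cauchyKernel ν hz).im).const_mul (z.im)⁻¹
  refine h.congr (ae_of_all _ fun t => ?_)
  simp only [RCLike.im_to_complex, im_cauchyKernel]
  field_simp

/-- Off the real axis the Borel transform has nonzero imaginary part unless `ν = 0`. -/
lemma borelTransform_im_ne_zero (ν : Measure ℝ) [IsFiniteMeasure ν] (hν : ν ≠ 0) {z : ℂ}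
    (hz : z.im ≠ 0) : (borelTransform ν z).im ≠ 0 := by
  rw [im_borelTransform ν hz]
  refine mul_ne_zero hz (ne_of_gt ?_)
  rw [integral_pos_iff_support_of_nonneg (fun t => inv_nonneg.mpr (normSq_nonneg _))
    (integrable_normSq ν hz)]
  have : Function.support (fun t : ℝ => (normSq ((t : ℂ) - z))⁻¹) = univ := by
    ext t
    simpa using sub_ne_zero_of_im hz t
  rw [this]
  exact Measure.measure_univ_pos.mpr hν

lemma one_add_mul_borel_ne_zero (ν : Measure ℝ) [IsFiniteMeasure ν] (α : ℝ) {z : ℂ}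
    (hz : z.im ≠ 0) : 1 + (α : ℂ) * borelTransform ν z ≠ 0 := by
  intro h
  by_cases hν : ν = 0
  · subst hν
    simp [borelTransform] at h
  · have him := congrArg Complex.im h
    have hα : α = 0 := by
      simpa [borelTransform_im_ne_zero ν hν hz] using him
    simp [hα] at h

/-- The Aronszajn–Krein formula. It is obtained from the explicit solution
`g(t) = (1 + α F_μ(z))⁻¹ (t - z)⁻¹` of the resolvent equation `(A_α - z) g = 1`. -/
lemma borel_spectral {μ : Measure ℝ} [IsFiniteMeasure μ]
    (one : Lp ℂ 2 μ) (hone : (one : ℝ → ℂ) =ᵐ[μ] fun _ => 1)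
    (α : ℝ) (T : Lp ℂ 2 μ →L[ℂ] Lp ℂ 2 μ)
    (hT : ∀ g : Lp ℂ 2 μ, (T g : ℝ → ℂ) =ᵐ[μ] fun t => t * g t + (α : ℂ) * ⟪one, g⟫)
    (ν : Measure ℝ) {z : ℂ} (hz : z.im ≠ 0)
    (hres : ∀ g : Lp ℂ 2 μ, T g - z • g = one → ⟪one, g⟫ = ∫ t, ((t : ℂ) - z)⁻¹ ∂ν) :
    borelTransform ν z = borelTransform μ z / (1 + α * borelTransform μ z) := by
  set F := borelTransform μ z with hF
  have hne : 1 + (α : ℂ) * F ≠ 0 := one_add_mul_borel_ne_zero μ α hz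
  set k : Lp ℂ 2 μ := (memLp_cauchyKernel μ hz 2).toLp _ with hk
  have hkae : (k : ℝ → ℂ) =ᵐ[μ] fun t : ℝ => ((t : ℂ) - z)⁻¹ := MemLp.coeFn_toLp _
  have hink : ⟪one, k⟫ = F := by
    rw [L2.inner_def, hF, borelTransform]
    refine integral_congr_ae ?_
    filter_upwards [hone, hkae] with t h1 h2
    simp [h1, h2]
  set c : ℂ := (1 + (α : ℂ) * F)⁻¹ with hc
  have hin : ⟪one, c • k⟫ = c * F := by rw [inner_smul_right, hink]
  have hsol : T (c • k) - z • (c • k) = one := by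
    apply Lp.ext
    filter_upwards [hone, hkae, hT (c • k), Lp.coeFn_sub (T (c • k)) (z • (c • k)),
      Lp.coeFn_smul z (c • k), Lp.coeFn_smul c k] with t h1 h2 h3 h4 h5 h6
    rw [h4, Pi.sub_apply, h3, h5, Pi.smul_apply, h6, Pi.smul_apply, h2, h1, hin]
    have ht := sub_ne_zero_of_im hz t
    have : (t : ℂ) * (c * ((t : ℂ) - z)⁻¹) - z * (c * ((t : ℂ) - z)⁻¹) = c := by
      field_simp
    simp only [smul_eq_mul]
    calc _ = c * (1 + (α : ℂ) * F) := by linear_combination this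
      _ = 1 := inv_mul_cancel₀ hne
  have h := hres _ hsol
  rw [hin] at h
  rw [borelTransform, ← h, hc]
  field_simp

/-- The Poisson-kernel lower bound `Im F_ν(x + i r) ≥ ν(B(x, r)) / (2 r)`. -/
lemma measureReal_closedBall_le (ν : Measure ℝ) [IsFiniteMeasure ν] (x : ℝ) {r : ℝ} (hr : 0 < r) :
    ν.real (Metric.closedBall x r) / (2 * r) ≤ ‖borelTransform ν (x + r * I)‖ := by
  have him : ((x : ℂ) + r * I).im = r := by simp
  have hz : ((x : ℂ) + r * I).im ≠ 0 := by rw [him]; exact hr.ne'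
  refine le_trans ?_ ((le_abs_self _).trans (abs_im_le_norm _))
  rw [im_borelTransform ν hz, him]
  have hint := integrable_normSq ν hz
  have h1 : ν.real (Metric.closedBall x r) * (2 * r ^ 2)⁻¹
      ≤ ∫ t, (normSq ((t : ℂ) - (x + r * I)))⁻¹ ∂ν := by
    refine le_trans ?_ (setIntegral_le_integral (s := Metric.closedBall x r) hint
      (ae_of_all _ fun t => inv_nonneg.mpr (normSq_nonneg _)))
    have h2 : ∫ _ in Metric.closedBall x r, (2 * r ^ 2)⁻¹ ∂ν
        = ν.real (Metric.closedBall x r) * (2 * r ^ 2)⁻¹ := by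
      rw [setIntegral_const, smul_eq_mul]
    rw [← h2]
    refine setIntegral_mono_on integrableOn_const hint.integrableOn
      Metric.isClosed_closedBall.measurableSet fun t ht => ?_
    have hns : normSq ((t : ℂ) - (x + r * I)) = (t - x) ^ 2 + r ^ 2 := by
      simp [normSq_apply]
      ring
    rw [Metric.mem_closedBall, Real.dist_eq] at ht
    have hsq : (t - x) ^ 2 ≤ r ^ 2 := sq_le_sq' (abs_le.mp ht).1 (abs_le.mp ht).2
    rw [hns]
    exact inv_anti₀ (by positivity) (by linarith)
  calc _ = r * (ν.real (Metric.closedBall x r) * (2 * r ^ 2)⁻¹) := by field_simp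
    _ ≤ _ := mul_le_mul_of_nonneg_left h1 hr.le

/-- The Borel transform blows up along vertical lines at almost every point for the singular
part: the singular part has infinite symmetric derivative there. -/
lemma ae_singularPart_lt_norm_borel (ν : Measure ℝ) [IsFiniteMeasure ν] {C : ℝ} (hC : 0 < C) :
    ∀ᵐ x : ℝ ∂(ν.singularPart volume),
      ∀ᶠ r : ℝ in 𝓝[>] 0, C < ‖borelTransform ν (x + r * I)‖ := by
  set σ := ν.singularPart volume with hσ
  have hsing : (volume : Measure ℝ).MutuallySingular σ :=
    (Measure.mutuallySingular_singularPart ν volume).symm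
  have h0 : (volume : Measure ℝ).rnDeriv σ =ᵐ[σ] 0 :=
    (Measure.rnDeriv_eq_zero _ _).mpr hsing
  filter_upwards [Besicovitch.ae_tendsto_rnDeriv (volume : Measure ℝ) σ, h0] with x hx hx0
  rw [hx0] at hx
  have hpos : (0 : ENNReal) < ENNReal.ofReal C⁻¹ := ENNReal.ofReal_pos.mpr (inv_pos.mpr hC)
  filter_upwards [hx.eventually_lt_const hpos, self_mem_nhdsWithin] with r hr hr0
  have hr0 : 0 < r := hr0
  refine lt_of_lt_of_le ?_ (measureReal_closedBall_le ν x hr0)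
  have hle : σ.real (Metric.closedBall x r) ≤ ν.real (Metric.closedBall x r) :=
    ENNReal.toReal_mono (measure_ne_top _ _) (Measure.singularPart_le ν volume _)
  refine lt_of_lt_of_le ?_ (div_le_div_of_nonneg_right hle (by positivity))
  rw [Real.volume_closedBall] at hr
  have hσ0 : σ (Metric.closedBall x r) ≠ 0 := by
    -- otherwise the quotient of the two ball measures is `∞`
    intro h
    rw [h, ENNReal.div_zero (by simpa using hr0)] at hr
    exact not_top_lt hr
  have hσpos : 0 < σ.real (Metric.closedBall x r) :=
    ENNReal.toReal_pos hσ0 (measure_ne_top _ _)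
  have hr' := (ENNReal.toReal_lt_toReal hr.ne_top ENNReal.ofReal_ne_top).mpr hr
  rw [ENNReal.toReal_div, ENNReal.toReal_ofReal (by positivity),
    ENNReal.toReal_ofReal (by positivity)] at hr'
  change 2 * r / σ.real (Metric.closedBall x r) < C⁻¹ at hr'
  rw [div_lt_iff₀ hσpos, inv_mul_eq_div, lt_div_iff₀ hC] at hr'
  rw [lt_div_iff₀ (by positivity)]
  linarith

/-- **Aronszajn–Donoghue.** For `α ≠ β`, the singular parts (with respect to
Lebesgue measure) of the spectral measures `μ_α` and `μ_β` are mutually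
singular. -/
theorem aronszajn_donoghue
{μ : Measure ℝ} [IsFiniteMeasure μ]
    (hsupp : ∃ K : Set ℝ, IsCompact K ∧ μ Kᶜ = 0)
    (one : Lp ℂ 2 μ) (hone : (one : ℝ → ℂ) =ᵐ[μ] fun _ => 1)
    (A : ℝ → (Lp ℂ 2 μ →L[ℂ] Lp ℂ 2 μ))
    (hA : ∀ (α : ℝ) (g : Lp ℂ 2 μ),
      (A α g : ℝ → ℂ) =ᵐ[μ] fun t => t * g t + (α : ℂ) * ⟪one, g⟫)
    (μm : ℝ → Measure ℝ)
    (hμm_fin : ∀ α, IsFiniteMeasure (μm α))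
    (hμm0 : μm 0 = μ)
    (hres : ∀ (α : ℝ) (z : ℂ), z.im ≠ 0 → ∀ g : Lp ℂ 2 μ,
      A α g - z • g = one → ⟪one, g⟫ = ∫ t, ((t : ℂ) - z)⁻¹ ∂(μm α))
    (α β : ℝ) (hαβ : α ≠ β) :
    ((μm α).singularPart volume).MutuallySingular
      ((μm β).singularPart volume) := by
  have hfα := hμm_fin α
  have hfβ := hμm_fin β
  have hd : 0 < |α - β| := abs_pos.mpr (sub_ne_zero.mpr hαβ)
  -- with `C = 2 / |α - β|`, two numbers of modulus `> C` have inverses at distance `< |α - β|`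
  have hC : 0 < 2 / |α - β| := by positivity
  refine Measure.MutuallySingular.mk (ae_singularPart_lt_norm_borel (μm α) hC)
    (ae_singularPart_lt_norm_borel (μm β) hC) ?_
  intro x _
  by_contra hx
  simp only [mem_union, mem_compl_iff, mem_ofPred_eq, not_or, not_not] at hx
  obtain ⟨r, ⟨hα, hβ⟩, hr⟩ := ((hx.1.and hx.2).and self_mem_nhdsWithin).exists
  have hr : 0 < r := hr
  have hz : ((x : ℂ) + r * I).im ≠ 0 := by simpa using hr.ne'
  set z : ℂ := (x : ℂ) + r * I
  have eα := borel_spectral one hone α (A α) (hA α) (μm α) hz (hres α z hz)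
  have eβ := borel_spectral one hone β (A β) (hA β) (μm β) hz (hres β z hz)
  have nα := one_add_mul_borel_ne_zero μ α hz
  have nβ := one_add_mul_borel_ne_zero μ β hz
  have hF : borelTransform μ z ≠ 0 := by
    intro h
    rw [eα, h, zero_div, norm_zero] at hα
    exact absurd hα (not_lt.mpr hC.le)
  have key : (borelTransform (μm α) z)⁻¹ - (borelTransform (μm β) z)⁻¹ = ((α - β : ℝ) : ℂ) := by
    rw [eα, eβ, inv_div, inv_div]
    push_cast
    field_simp
    ring
  have hinv : ∀ w : ℂ, 2 / |α - β| < ‖w‖ → ‖w⁻¹‖ < |α - β| / 2 := by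
    intro w hw
    rw [norm_inv, ← inv_div]
    exact inv_strictAnti₀ hC hw
  have h1 := norm_sub_le (borelTransform (μm α) z)⁻¹ (borelTransform (μm β) z)⁻¹
  rw [key, norm_real, Real.norm_eq_abs] at h1
  linarith [hinv _ hα, hinv _ hβ]
end

section
/- (Aleksandrov's spectral averaging.) For every nonnegative Borel measurable function f on 𝕋, the function γ ↦ ∫_𝕋 f dσ_γ is Borel measurable on 𝕋 and ∫_𝕋 (∫_𝕋 f(ξ) dσ_γ(ξ)) dm(γ) = ∫_𝕋 f dm (equality in [0, ∞]). -/
/-!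
Writing `(ξ + z) / (ξ - z) = 2 (1 - z ξ⁻¹)⁻¹ - 1`, the Clark identity says that the Cauchy transform
`∫ (1 - z ξ⁻¹)⁻¹ dσ_γ(ξ)` equals `(1 - γ̄ θ(z))⁻¹`. By the Schwarz lemma `|θ(z)| < 1`, so this is a
continuous function of `γ`, and its mean over the circle is `1` by the mean value property.

The moments `∫ ξ⁻ⁿ dσ_γ` are the Taylor coefficients at `z = 0` of that transform. They are extracted
by induction on `n`: the functions `R_n(γ, z) = ∫ ξ⁻ⁿ (1 - z ξ⁻¹)⁻¹ dσ_γ(ξ)` satisfy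
`R_n(z) - R_n(0) = z R_{n+1}(z)`, so measurability in `γ` and the value of the mean (`1` for `n = 0`,
`0` otherwise) pass from `R_n` to `R_{n+1}`, the point `z = 0` being reached by dominated convergence
(`average_shiftedCauchy`). Hence every Fourier coefficient of `σ_γ` is measurable in `γ` and its mean
is the corresponding coefficient of Haar measure.

Density of trigonometric polynomials carries this over to all continuous functions
(`integral_cont_of_fourier`); approximating indicators of closed sets then shows that `γ ↦ σ_γ` is a
measurable family whose mixture `∫ σ_γ dm(γ)` is `m` (`bind_eq_of_fourier`). The circle is
parametrised by `ℝ / 2πℤ` there, in order to use Mathlib's Fourier monomials.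
-/


open MeasureTheory Complex Set

/-- Normalized Lebesgue (Haar) measure on the unit circle `𝕋 ⊆ ℂ`. -/
noncomputable def circleHaar : Measure ℂ :=
  (ENNReal.ofReal (2 * Real.pi)⁻¹) •
    (volume.restrict (Set.Ioc 0 (2 * Real.pi))).map (circleMap 0 1)

open Filter Topology

/-! ### Families of measures on `ℝ / 2πℤ` with given Fourier coefficients -/

/-- The circle as `ℝ / 2πℤ`. -/
abbrev Circ : Type := AddCircle (2 * Real.pi)

instance : Fact (0 < 2 * Real.pi) := ⟨Real.two_pi_pos⟩

/-- The functions `g` for which `ω ↦ ∫ g dτ_ω` is measurable with mean `∫ g dρ` form a closed subspace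
of `C(ℝ / 2πℤ)`, so they are all continuous functions as soon as they include the Fourier monomials. -/
lemma integral_cont_of_fourier {Ω : Type*} [MeasurableSpace Ω] (m : Measure Ω)
    [IsProbabilityMeasure m] (τ : Ω → Measure Circ) [∀ ω, IsProbabilityMeasure (τ ω)]
    (ρ : Measure Circ) [IsProbabilityMeasure ρ]
    (hmeas : ∀ n : ℤ, Measurable fun ω => ∫ x, fourier n x ∂(τ ω))
    (hint : ∀ n : ℤ, ∫ ω, ∫ x, fourier n x ∂(τ ω) ∂m = ∫ x, fourier n x ∂ρ)
    (g : C(Circ, ℂ)) :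
    (Measurable fun ω => ∫ x, g x ∂(τ ω)) ∧
      ∫ ω, ∫ x, g x ∂(τ ω) ∂m = ∫ x, g x ∂ρ := by
  have hI : ∀ (h : C(Circ, ℂ)) (μ : Measure Circ) [IsProbabilityMeasure μ], Integrable h μ :=
    fun h μ _ => h.continuous.integrable_of_hasCompactSupport
      (HasCompactSupport.of_compactSpace h)
  have hB : ∀ (h : C(Circ, ℂ)) (μ : Measure Circ) [IsProbabilityMeasure μ],
      ‖∫ x, h x ∂μ‖ ≤ ‖h‖ := fun h μ _ => by
    simpa using norm_integral_le_of_norm_le_const (μ := μ)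
      (Eventually.of_forall fun x => h.norm_coe_le_norm x)
  have hI2 : ∀ h : C(Circ, ℂ), (Measurable fun ω => ∫ x, h x ∂(τ ω)) →
      Integrable (fun ω => ∫ x, h x ∂(τ ω)) m := fun h hh =>
    Integrable.of_bound hh.aestronglyMeasurable ‖h‖ (Eventually.of_forall fun ω => hB h (τ ω))
  have hspan : ∀ h ∈ Submodule.span ℂ (range (@fourier (2 * Real.pi))),
      (Measurable fun ω => ∫ x, h x ∂(τ ω)) ∧
        ∫ ω, ∫ x, h x ∂(τ ω) ∂m = ∫ x, h x ∂ρ := by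
    intro h hh
    induction hh using Submodule.span_induction with
    | mem h hh =>
      obtain ⟨n, rfl⟩ := hh
      exact ⟨hmeas n, hint n⟩
    | zero => simp
    | add h k _ _ ih ik =>
      have e : ∀ (μ : Measure Circ) [IsProbabilityMeasure μ],
          ∫ x, (h + k) x ∂μ = ∫ x, h x ∂μ + ∫ x, k x ∂μ := fun μ _ =>
        integral_add (hI h μ) (hI k μ)
      simp_rw [e]
      refine ⟨ih.1.add ik.1, ?_⟩
      rw [integral_add (hI2 h ih.1) (hI2 k ik.1), ih.2, ik.2]
    | smul c h _ ih =>
      have e : ∀ (μ : Measure Circ),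
          ∫ x, (c • h) x ∂μ = c * ∫ x, h x ∂μ := fun μ => by
        simp [integral_const_mul]
      simp_rw [e]
      refine ⟨ih.1.const_mul c, ?_⟩
      rw [integral_const_mul, ih.2]
  have hg : g ∈ closure (Submodule.span ℂ (range (@fourier (2 * Real.pi))) : Set C(Circ, ℂ)) := by
    have := span_fourier_closure_eq_top (T := 2 * Real.pi)
    rw [← Submodule.topologicalClosure_coe, this]
    trivial
  obtain ⟨u, hu, hlim⟩ := mem_closure_iff_seq_limit.1 hg
  have hconv : ∀ (μ : Measure Circ) [IsProbabilityMeasure μ],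
      Tendsto (fun k => ∫ x, u k x ∂μ) atTop (𝓝 (∫ x, g x ∂μ)) := fun μ _ => by
    rw [tendsto_iff_norm_sub_tendsto_zero]
    refine squeeze_zero (fun _ => norm_nonneg _) (fun k => ?_)
      (tendsto_iff_norm_sub_tendsto_zero.1 hlim)
    rw [← integral_sub (hI _ μ) (hI _ μ)]
    exact hB (u k - g) μ
  refine ⟨measurable_of_tendsto_metrizable (fun k => (hspan _ (hu k)).1)
    (tendsto_pi_nhds.2 fun ω => hconv (τ ω)), ?_⟩
  obtain ⟨C, hC⟩ := (Metric.isBounded_range_of_tendsto u hlim).exists_norm_le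
  refine tendsto_nhds_unique (tendsto_integral_of_dominated_convergence (μ := m) (fun _ => C)
    (fun k => (hspan _ (hu k)).1.aestronglyMeasurable) (integrable_const C)
    (fun k => Eventually.of_forall fun ω => (hB (u k) (τ ω)).trans (hC _ ⟨k, rfl⟩))
    (Eventually.of_forall fun ω => hconv (τ ω))) ?_
  simp_rw [fun k => (hspan _ (hu k)).2]
  exact hconv ρ

/-- A family of probability measures whose Fourier coefficients are measurable is measurable, and its
mixture is determined by the means of these coefficients. -/
lemma bind_eq_of_fourier {Ω : Type*} [MeasurableSpace Ω] (m : Measure Ω)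
    [IsProbabilityMeasure m] (τ : Ω → Measure Circ) [∀ ω, IsProbabilityMeasure (τ ω)]
    (ρ : Measure Circ) [IsProbabilityMeasure ρ]
    (hmeas : ∀ n : ℤ, Measurable fun ω => ∫ x, fourier n x ∂(τ ω))
    (hint : ∀ n : ℤ, ∫ ω, ∫ x, fourier n x ∂(τ ω) ∂m = ∫ x, fourier n x ∂ρ) :
    Measurable τ ∧ m.bind τ = ρ := by
  have key : ∀ f : BoundedContinuousFunction Circ NNReal,
      (Measurable fun ω => ∫⁻ x, f x ∂(τ ω)) ∧
        ∫⁻ ω, ∫⁻ x, f x ∂(τ ω) ∂m = ∫⁻ x, f x ∂ρ := by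
    intro f
    obtain ⟨h1, h2⟩ := integral_cont_of_fourier m τ ρ hmeas hint
      ⟨fun x => ((f x : ℝ) : ℂ), by fun_prop⟩
    simp only [ContinuousMap.coe_mk, integral_complex_ofReal, Complex.ofReal_inj] at h1 h2
    have h1' : Measurable fun ω => ∫ x, (f x : ℝ) ∂(τ ω) := by
      simpa [Function.comp_def] using Complex.measurable_re.comp h1
    have e : ∀ (μ : Measure Circ) [IsProbabilityMeasure μ],
        ∫⁻ x, f x ∂μ = ENNReal.ofReal (∫ x, (f x : ℝ) ∂μ) := fun μ _ => by
      rw [← BoundedContinuousFunction.toReal_lintegral_coe_eq_integral f μ,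
        ENNReal.ofReal_toReal (BoundedContinuousFunction.lintegral_lt_top_of_nnreal μ f).ne]
    let G : C(Circ, ℝ) := ⟨fun x => (f x : ℝ), by fun_prop⟩
    simp_rw [e]
    refine ⟨h1'.ennreal_ofReal, ?_⟩
    rw [← h2, ofReal_integral_eq_lintegral_ofReal]
    · refine Integrable.of_bound h1'.aestronglyMeasurable ‖G‖ (Eventually.of_forall fun ω => ?_)
      refine (norm_integral_le_of_norm_le_const (C := ‖G‖) (Eventually.of_forall fun x => ?_)).trans
        (by simp)
      exact G.norm_coe_le_norm x
    · exact Eventually.of_forall fun ω => integral_nonneg fun x => by positivity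
  have hτ : Measurable τ := by
    refine Measurable.measure_of_isPiSystem_of_isProbabilityMeasure
      (S := {s | IsClosed s}) ?_ isPiSystem_isClosed fun F hF => ?_
    · rw [BorelSpace.measurable_eq (α := Circ), borel_eq_generateFrom_isClosed]
    · exact measurable_of_tendsto_metrizable (fun k => (key (hF.apprSeq k)).1)
        (tendsto_pi_nhds.2 fun ω => HasOuterApproxClosed.tendsto_lintegral_apprSeq hF (τ ω))
  refine ⟨hτ, (ext_of_forall_lintegral_eq_of_IsFiniteMeasure fun f => ?_).symm⟩
  rw [Measure.lintegral_bind hτ.aemeasurable (by fun_prop), (key f).2]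

/-! ### Extracting moments from the Cauchy transform -/

lemma norm_sphere {μ : Measure ℂ} (h : μ (Metric.sphere (0 : ℂ) 1)ᶜ = 0) :
    ∀ᵐ ξ ∂μ, ‖ξ‖ = 1 := by
  have : ∀ᵐ ξ ∂μ, ξ ∈ Metric.sphere (0 : ℂ) 1 := h
  simpa using this

/-- The kernel `ξ⁻ⁿ (1 - z ξ⁻¹)⁻¹`: the Cauchy kernel for `n = 0`, and `ξ⁻ⁿ` for `z = 0`. -/
noncomputable def shiftedCauchy (n : ℕ) (z ξ : ℂ) : ℂ := ξ⁻¹ ^ n * (1 - z * ξ⁻¹)⁻¹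

lemma measurable_shiftedCauchy (n : ℕ) (z : ℂ) : Measurable (shiftedCauchy n z) := by
  unfold shiftedCauchy; fun_prop

lemma one_sub_mul_ne_zero {z w : ℂ} (hz : ‖z‖ < 1) (hw : ‖w‖ ≤ 1) : 1 - z * w ≠ 0 := by
  intro h
  have h1 : z * w = 1 := (sub_eq_zero.1 h).symm
  have h2 : ‖z‖ * ‖w‖ = 1 := by rw [← norm_mul, h1, norm_one]
  nlinarith [norm_nonneg z, norm_nonneg w]

lemma norm_shiftedCauchy_le (n : ℕ) {z ξ : ℂ} (hz : ‖z‖ < 1) (hξ : ‖ξ‖ = 1) :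
    ‖shiftedCauchy n z ξ‖ ≤ (1 - ‖z‖)⁻¹ := by
  have h : 1 - ‖z‖ ≤ ‖1 - z * ξ⁻¹‖ := by
    simpa [hξ] using norm_sub_norm_le (1 : ℂ) (z * ξ⁻¹)
  simp only [shiftedCauchy, norm_mul, norm_pow, norm_inv, hξ, inv_one, one_pow, one_mul]
  exact inv_anti₀ (by linarith) h

lemma integrable_shiftedCauchy (n : ℕ) {z : ℂ} (hz : ‖z‖ < 1) (μ : Measure ℂ)
    [IsProbabilityMeasure μ] (hμ : ∀ᵐ ξ ∂μ, ‖ξ‖ = 1) : Integrable (shiftedCauchy n z) μ :=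
  Integrable.of_bound (measurable_shiftedCauchy n z).aestronglyMeasurable _
    (hμ.mono fun _ h => norm_shiftedCauchy_le n hz h)

lemma norm_integral_shiftedCauchy_le (n : ℕ) {z : ℂ} (hz : ‖z‖ < 1) (μ : Measure ℂ)
    [IsProbabilityMeasure μ] (hμ : ∀ᵐ ξ ∂μ, ‖ξ‖ = 1) :
    ‖∫ ξ, shiftedCauchy n z ξ ∂μ‖ ≤ (1 - ‖z‖)⁻¹ := by
  simpa using norm_integral_le_of_norm_le_const (μ := μ)
    (hμ.mono fun _ h => norm_shiftedCauchy_le n hz h)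

lemma integral_shiftedCauchy_succ (n : ℕ) {z : ℂ} (hz : ‖z‖ < 1) (hz0 : z ≠ 0) (μ : Measure ℂ)
    [IsProbabilityMeasure μ] (hμ : ∀ᵐ ξ ∂μ, ‖ξ‖ = 1) :
    ∫ ξ, shiftedCauchy (n + 1) z ξ ∂μ =
      z⁻¹ * (∫ ξ, shiftedCauchy n z ξ ∂μ - ∫ ξ, shiftedCauchy n 0 ξ ∂μ) := by
  rw [← integral_sub (integrable_shiftedCauchy n hz μ hμ)
    (integrable_shiftedCauchy n (by simp) μ hμ), ← integral_const_mul]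
  refine integral_congr_ae (hμ.mono fun ξ hξ => ?_)
  have h1 : 1 - z * ξ⁻¹ ≠ 0 := one_sub_mul_ne_zero hz (by simp [hξ])
  simp only [shiftedCauchy]
  generalize ξ⁻¹ = w at *
  field_simp
  ring

/-- The sequence `1 / (k + 2)` of nonzero points of the disc tending to `0`. -/
noncomputable def nullSeq (k : ℕ) : ℂ := ((1 / ((k : ℝ) + 2) : ℝ) : ℂ)

lemma nullSeq_ne_zero (k : ℕ) : nullSeq k ≠ 0 := by
  simp only [nullSeq, ne_eq, Complex.ofReal_eq_zero]; positivity

lemma norm_nullSeq_le (k : ℕ) : ‖nullSeq k‖ ≤ 1 / 2 := by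
  rw [nullSeq, Complex.norm_real, Real.norm_of_nonneg (by positivity)]
  exact one_div_le_one_div_of_le (by norm_num) (by linarith [k.cast_nonneg (α := ℝ)])

lemma tendsto_nullSeq : Tendsto nullSeq atTop (𝓝 0) := by
  have h : Tendsto (fun k : ℕ => 1 / ((k : ℝ) + 2)) atTop (𝓝 0) :=
    tendsto_const_nhds.div_atTop (tendsto_natCast_atTop_atTop.atTop_add tendsto_const_nhds)
  have h' := (Complex.continuous_ofReal.tendsto 0).comp h
  rwa [Complex.ofReal_zero] at h'

lemma bound_nullSeq (k : ℕ) : (1 - ‖nullSeq k‖)⁻¹ ≤ 2 := by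
  have := norm_nullSeq_le k
  rw [show (2 : ℝ) = (1 / 2)⁻¹ by norm_num]
  exact inv_anti₀ (by norm_num) (by linarith)

lemma tendsto_integral_shiftedCauchy (n : ℕ) (μ : Measure ℂ)
    [IsProbabilityMeasure μ] (hμ : ∀ᵐ ξ ∂μ, ‖ξ‖ = 1) :
    Tendsto (fun k => ∫ ξ, shiftedCauchy n (nullSeq k) ξ ∂μ) atTop
      (𝓝 (∫ ξ, shiftedCauchy n 0 ξ ∂μ)) := by
  refine tendsto_integral_of_dominated_convergence (fun _ => 2)
    (fun k => (measurable_shiftedCauchy n _).aestronglyMeasurable) (integrable_const _)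
    (fun k => hμ.mono fun ξ hξ => (norm_shiftedCauchy_le n
      ((norm_nullSeq_le k).trans_lt (by norm_num)) hξ).trans (bound_nullSeq k))
    (Eventually.of_forall fun ξ => ?_)
  have : ContinuousAt (fun z => shiftedCauchy n z ξ) 0 := by
    unfold shiftedCauchy
    exact continuousAt_const.mul (ContinuousAt.inv₀ (by fun_prop) (by simp))
  exact this.tendsto.comp tendsto_nullSeq

/-- If the Cauchy transforms of `τ_ω` are measurable in `ω` with mean `1`, then the shifted ones
are measurable too, with mean `0` for `n ≥ 1`: for `z ≠ 0` this is the recursion `integral_shiftedCauchy_succ`, and `z = 0`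
is a limit of such points. -/
lemma average_shiftedCauchy {Ω : Type*} [MeasurableSpace Ω] (m : Measure Ω)
    [IsProbabilityMeasure m] (τ : Ω → Measure ℂ) [∀ ω, IsProbabilityMeasure (τ ω)]
    (hτ : ∀ ω, ∀ᵐ ξ ∂(τ ω), ‖ξ‖ = 1)
    (h0 : ∀ z : ℂ, ‖z‖ < 1 → (Measurable fun ω => ∫ ξ, shiftedCauchy 0 z ξ ∂(τ ω)) ∧
      ∫ ω, ∫ ξ, shiftedCauchy 0 z ξ ∂(τ ω) ∂m = 1) (n : ℕ) :
    ∀ z : ℂ, ‖z‖ < 1 → (Measurable fun ω => ∫ ξ, shiftedCauchy n z ξ ∂(τ ω)) ∧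
      ∫ ω, ∫ ξ, shiftedCauchy n z ξ ∂(τ ω) ∂m = if n = 0 then 1 else 0 := by
  induction n with
  | zero => simpa using h0
  | succ n ih =>
    have hI : ∀ z : ℂ, ‖z‖ < 1 → Integrable (fun ω => ∫ ξ, shiftedCauchy n z ξ ∂(τ ω)) m :=
      fun z hz => Integrable.of_bound (ih z hz).1.aestronglyMeasurable _
        (Eventually.of_forall fun ω => norm_integral_shiftedCauchy_le n hz (τ ω) (hτ ω))
    have hne : ∀ z : ℂ, ‖z‖ < 1 → z ≠ 0 →
        (Measurable fun ω => ∫ ξ, shiftedCauchy (n + 1) z ξ ∂(τ ω)) ∧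
          ∫ ω, ∫ ξ, shiftedCauchy (n + 1) z ξ ∂(τ ω) ∂m = 0 := by
      intro z hz hz0
      simp_rw [fun ω => integral_shiftedCauchy_succ n hz hz0 (τ ω) (hτ ω)]
      refine ⟨((ih z hz).1.sub (ih 0 (by simp)).1).const_mul _, ?_⟩
      rw [integral_const_mul, integral_sub (hI z hz) (hI 0 (by simp)), (ih z hz).2,
        (ih 0 (by simp)).2, sub_self, mul_zero]
    intro z hz
    rw [if_neg n.succ_ne_zero]
    rcases eq_or_ne z 0 with rfl | hz0
    · have hk : ∀ k, ‖nullSeq k‖ < 1 := fun k => (norm_nullSeq_le k).trans_lt (by norm_num)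
      have hlim := fun ω => tendsto_integral_shiftedCauchy (n + 1) (τ ω) (hτ ω)
      refine ⟨measurable_of_tendsto_metrizable
        (fun k => (hne _ (hk k) (nullSeq_ne_zero k)).1) (tendsto_pi_nhds.2 hlim), ?_⟩
      refine tendsto_nhds_unique (tendsto_integral_of_dominated_convergence (μ := m) (fun _ => 2)
        (fun k => (hne _ (hk k) (nullSeq_ne_zero k)).1.aestronglyMeasurable) (integrable_const _)
        (fun k => Eventually.of_forall fun ω => (norm_integral_shiftedCauchy_le (n + 1) (hk k)
          (τ ω) (hτ ω)).trans (bound_nullSeq k)) (Eventually.of_forall hlim)) ?_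
      simp_rw [fun k => (hne _ (hk k) (nullSeq_ne_zero k)).2]
      exact tendsto_const_nhds
    · exact hne z hz hz0

/-! ### Haar measure on the circle -/

lemma ae_circleHaar : ∀ᵐ ξ ∂circleHaar, ‖ξ‖ = 1 := by
  refine Measure.ae_smul_measure ?_ _
  rw [ae_map_iff (by fun_prop) (measurableSet_eq_fun (by fun_prop) (by fun_prop))]
  exact Eventually.of_forall fun t => by simp

instance : IsProbabilityMeasure circleHaar := by
  refine ⟨?_⟩
  rw [circleHaar, Measure.smul_apply, Measure.map_apply (by fun_prop) MeasurableSet.univ]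
  simp only [preimage_univ, Measure.restrict_apply MeasurableSet.univ, univ_inter,
    Real.volume_Ioc, sub_zero, smul_eq_mul]
  rw [← ENNReal.ofReal_mul (by positivity), inv_mul_cancel₀ Real.two_pi_pos.ne',
    ENNReal.ofReal_one]

lemma integral_circleHaar {g : ℂ → ℂ} (hg : Measurable g) :
    ∫ ξ, g ξ ∂circleHaar = Real.circleAverage g 0 1 := by
  rw [circleHaar, integral_smul_measure, integral_map (by fun_prop) hg.aestronglyMeasurable,
    Real.circleAverage_def, intervalIntegral.integral_of_le Real.two_pi_pos.le,
    ENNReal.toReal_ofReal (by positivity)]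

/-- The mean value property, for a function of `ξ⁻¹` (which is `ξ̄` on the circle). -/
lemma integral_circleHaar_inv {g : ℂ → ℂ} (hg : Measurable g)
    (hd : DifferentiableOn ℂ g (Metric.closedBall 0 1)) :
    ∫ ξ, g ξ⁻¹ ∂circleHaar = g 0 := by
  rw [integral_circleHaar (by fun_prop), Real.circleAverage_zero_one_congr_inv]
  refine DiffContOnCl.circleAverage ?_
  rw [abs_one]
  exact hd.diffContOnCl_ball le_rfl

/-! ### Transfer between the unit circle and `ℝ / 2πℤ` -/

/-- The angle of `ξ` as a point of `ℝ / 2πℤ`. -/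
noncomputable def angle (ξ : ℂ) : Circ := ((arg ξ : ℝ) : Circ)

lemma measurable_angle : Measurable angle :=
  (AddCircle.continuous_mk' (2 * Real.pi)).measurable.comp Complex.measurable_arg

lemma fourier_one_angle {ξ : ℂ} (hξ : ‖ξ‖ = 1) : fourier 1 (angle ξ) = ξ := by
  have h := Complex.norm_mul_exp_arg_mul_I ξ
  rw [hξ, Complex.ofReal_one, one_mul] at h
  rw [fourier_one, angle, AddCircle.toCircle_apply_mk, div_self Real.two_pi_pos.ne', one_mul, Circle.coe_exp, h]

lemma fourier_neg_angle (n : ℕ) {ξ : ℂ} (hξ : ‖ξ‖ = 1) :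
    fourier (-(n : ℤ)) (angle ξ) = shiftedCauchy n 0 ξ := by
  rw [fourier_apply, AddCircle.toCircle_zsmul, Circle.coe_zpow, ← fourier_one, fourier_one_angle hξ]
  simp [shiftedCauchy]

lemma integral_fourier_neg (n : ℕ) {μ : Measure ℂ} (hμ : ∀ᵐ ξ ∂μ, ‖ξ‖ = 1) :
    ∫ x, fourier (-(n : ℤ)) x ∂(μ.map angle) = ∫ ξ, shiftedCauchy n 0 ξ ∂μ := by
  rw [integral_map measurable_angle.aemeasurable
    (ContinuousMap.continuous _).measurable.aestronglyMeasurable]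
  exact integral_congr_ae (hμ.mono fun ξ hξ => fourier_neg_angle n hξ)

lemma integral_fourier_pos (n : ℕ) {μ : Measure ℂ} (hμ : ∀ᵐ ξ ∂μ, ‖ξ‖ = 1) :
    ∫ x, fourier (n : ℤ) x ∂(μ.map angle) =
      (starRingEnd ℂ) (∫ ξ, shiftedCauchy n 0 ξ ∂μ) := by
  rw [← integral_fourier_neg n hμ, ← integral_conj]
  simp_rw [fourier_neg, Complex.conj_conj]

lemma integral_circleHaar_shiftedCauchy (n : ℕ) :
    ∫ ξ, shiftedCauchy n 0 ξ ∂circleHaar = if n = 0 then 1 else 0 := by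
  have h := integral_circleHaar_inv (g := fun w => w ^ n) (by fun_prop) (by fun_prop)
  simp only [zero_pow_eq] at h
  simpa [shiftedCauchy] using h

lemma lintegral_map_angle {μ : Measure ℂ} (hμ : ∀ᵐ ξ ∂μ, ‖ξ‖ = 1) {f : ℂ → ENNReal}
    (hf : Measurable f) :
    ∫⁻ x, f (fourier 1 x) ∂(μ.map angle) = ∫⁻ ξ, f ξ ∂μ := by
  rw [lintegral_map (f := fun x => f (fourier 1 x))
    (hf.comp (fourier 1).continuous.measurable) measurable_angle]
  exact lintegral_congr_ae (hμ.mono fun ξ hξ => by simp only [fourier_one_angle hξ])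

/-- A family of probability measures on the circle whose Cauchy transforms are measurable in the
parameter and have mean `1` averages to Haar measure. -/
lemma averaging_of_cauchy {Ω : Type*} [MeasurableSpace Ω] (m : Measure Ω)
    [IsProbabilityMeasure m] (τ : Ω → Measure ℂ) [∀ ω, IsProbabilityMeasure (τ ω)]
    (hτ : ∀ ω, ∀ᵐ ξ ∂(τ ω), ‖ξ‖ = 1)
    (h0 : ∀ z : ℂ, ‖z‖ < 1 → (Measurable fun ω => ∫ ξ, shiftedCauchy 0 z ξ ∂(τ ω)) ∧
      ∫ ω, ∫ ξ, shiftedCauchy 0 z ξ ∂(τ ω) ∂m = 1) {f : ℂ → ENNReal} (hf : Measurable f) :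
    (Measurable fun ω => ∫⁻ ξ, f ξ ∂(τ ω)) ∧
      ∫⁻ ω, ∫⁻ ξ, f ξ ∂(τ ω) ∂m = ∫⁻ ξ, f ξ ∂circleHaar := by
  have hmom := fun n => average_shiftedCauchy m τ hτ h0 n 0 (by simp)
  have hprob : ∀ (μ : Measure ℂ) [IsProbabilityMeasure μ], IsProbabilityMeasure (μ.map angle) :=
    fun μ _ => Measure.isProbabilityMeasure_map measurable_angle.aemeasurable
  have := fun ω => hprob (τ ω)
  have := hprob circleHaar
  have hfou : ∀ n : ℤ, (Measurable fun ω => ∫ x, fourier n x ∂((τ ω).map angle)) ∧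
      ∫ ω, ∫ x, fourier n x ∂((τ ω).map angle) ∂m =
        ∫ x, fourier n x ∂(circleHaar.map angle) := by
    intro n
    obtain ⟨k, rfl | rfl⟩ := n.eq_nat_or_neg
    · simp_rw [fun ω => integral_fourier_pos k (hτ ω), integral_fourier_pos k ae_circleHaar]
      refine ⟨Complex.continuous_conj.measurable.comp (hmom k).1, ?_⟩
      rw [integral_conj, (hmom k).2, integral_circleHaar_shiftedCauchy]
    · simp_rw [fun ω => integral_fourier_neg k (hτ ω), integral_fourier_neg k ae_circleHaar]
      exact ⟨(hmom k).1, by rw [(hmom k).2, integral_circleHaar_shiftedCauchy]⟩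
  obtain ⟨hmeas, hbind⟩ := bind_eq_of_fourier m (fun ω => (τ ω).map angle)
    (circleHaar.map angle) (fun n => (hfou n).1) (fun n => (hfou n).2)
  have hf' : Measurable fun x : Circ => f (fourier 1 x) :=
    hf.comp (fourier 1).continuous.measurable
  simp_rw [← fun ω => lintegral_map_angle (hτ ω) hf, ← lintegral_map_angle ae_circleHaar hf]
  refine ⟨(Measure.measurable_lintegral hf').comp hmeas, ?_⟩
  rw [← hbind, Measure.lintegral_bind hmeas.aemeasurable hf'.aemeasurable]

/-! ### Aleksandrov–Clark measures -/

lemma herglotz_eq {z ξ : ℂ} (hz : ‖z‖ < 1) (hξ : ‖ξ‖ = 1) :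
    (ξ + z) / (ξ - z) = 2 * shiftedCauchy 0 z ξ - 1 := by
  have hξ0 : ξ ≠ 0 := by rintro rfl; simp at hξ
  have h1 : ξ - z ≠ 0 := fun h => by
    rw [sub_eq_zero.1 h] at hξ; exact hz.ne hξ
  have h2 : 1 - z * ξ⁻¹ = (ξ - z) / ξ := by field_simp
  rw [shiftedCauchy, h2]
  field_simp
  ring

/-- **Aleksandrov's spectral averaging.** Let `(σ_γ)` be the family of
Aleksandrov–Clark measures of a holomorphic `θ : 𝔻 → ℂ` with `|θ| ≤ 1`,
`θ(0) = 0`.  Then for every nonnegative Borel function `f` on the circle,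
`γ ↦ ∫ f dσ_γ` is measurable on `𝕋` and `∫_𝕋 (∫_𝕋 f dσ_γ) dm(γ) = ∫_𝕋 f dm`. -/
theorem aleksandrov_spectral_averaging
(θ : ℂ → ℂ)
    (hθ_hol : DifferentiableOn ℂ θ (Metric.ball 0 1))
    (hθ_le : ∀ z ∈ Metric.ball (0 : ℂ) 1, ‖θ z‖ ≤ 1)
    (hθ_0 : θ 0 = 0)
    (σ : ℂ → Measure ℂ)
    (hσ_prob : ∀ γ ∈ Metric.sphere (0 : ℂ) 1, IsProbabilityMeasure (σ γ))
    (hσ_supp : ∀ γ ∈ Metric.sphere (0 : ℂ) 1, σ γ (Metric.sphere (0 : ℂ) 1)ᶜ = 0)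
    (hClark : ∀ γ ∈ Metric.sphere (0 : ℂ) 1, ∀ z ∈ Metric.ball (0 : ℂ) 1,
      ∫ ξ, (ξ + z) / (ξ - z) ∂(σ γ)
        = (1 + (starRingEnd ℂ) γ * θ z) / (1 - (starRingEnd ℂ) γ * θ z))
    (f : ℂ → ENNReal) (hf : Measurable f) :
    AEMeasurable (fun γ => ∫⁻ ξ, f ξ ∂(σ γ)) circleHaar ∧
      ∫⁻ γ, (∫⁻ ξ, f ξ ∂(σ γ)) ∂circleHaar = ∫⁻ ξ, f ξ ∂circleHaar := by
  classical
  have hθ_lt : ∀ z : ℂ, ‖z‖ < 1 → ‖θ z‖ < 1 := fun z hz =>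
    (Complex.norm_le_norm_of_mapsTo_ball hθ_hol
      (fun w hw => by simpa using hθ_le w hw) hθ_0 hz).trans_lt hz
  -- `σ γ` is unconstrained for `γ` off the circle; an arbitrary choice there makes the family measurable.
  let τ : ℂ → Measure ℂ := fun γ => if ‖γ‖ = 1 then σ γ else Measure.dirac 1
  have hτσ : ∀ γ : ℂ, ‖γ‖ = 1 → τ γ = σ γ := fun γ hγ => if_pos hγ
  have hτ1 : ∀ γ : ℂ, ‖γ‖ ≠ 1 → τ γ = Measure.dirac 1 := fun γ hγ => if_neg hγ
  have hprob : ∀ γ, IsProbabilityMeasure (τ γ) := fun γ => by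
    by_cases h : ‖γ‖ = 1
    · rw [hτσ γ h]; exact hσ_prob γ (by simpa using h)
    · rw [hτ1 γ h]; infer_instance
  have hsupp : ∀ γ, ∀ᵐ ξ ∂(τ γ), ‖ξ‖ = 1 := fun γ => by
    by_cases h : ‖γ‖ = 1
    · rw [hτσ γ h]; exact norm_sphere (hσ_supp γ (by simpa using h))
    · rw [hτ1 γ h, ae_dirac_eq]; simp
  have hcauchy : ∀ γ z : ℂ, ‖z‖ < 1 → ∫ ξ, shiftedCauchy 0 z ξ ∂(τ γ) =
      if ‖γ‖ = 1 then (1 - (starRingEnd ℂ) γ * θ z)⁻¹ else (1 - z)⁻¹ := by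
    intro γ z hz
    split_ifs with h
    · have hne : 1 - (starRingEnd ℂ) γ * θ z ≠ 0 := by
        rw [mul_comm]
        exact one_sub_mul_ne_zero (hθ_lt z hz) (by simp [h])
      have hC := hClark γ (by simpa using h) z (by simpa using hz)
      rw [← hτσ γ h, integral_congr_ae ((hsupp γ).mono fun ξ hξ => herglotz_eq hz hξ),
        integral_sub ((integrable_shiftedCauchy 0 hz _ (hsupp γ)).const_mul 2)
          (integrable_const 1), integral_const_mul] at hC
      simp only [integral_const, probReal_univ, one_smul] at hC
      have h2 : (1 + (starRingEnd ℂ) γ * θ z) / (1 - (starRingEnd ℂ) γ * θ z)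
          = 2 * (1 - (starRingEnd ℂ) γ * θ z)⁻¹ - 1 := by
        field_simp
        ring
      linear_combination (hC + h2) / 2
    · rw [hτ1 γ h, integral_dirac]
      simp [shiftedCauchy]
  have hae : ∀ᵐ γ ∂circleHaar, ∫⁻ ξ, f ξ ∂(τ γ) = ∫⁻ ξ, f ξ ∂(σ γ) :=
    ae_circleHaar.mono fun γ hγ => by rw [hτσ γ hγ]
  have h0 : ∀ z : ℂ, ‖z‖ < 1 →
      (Measurable fun γ => ∫ ξ, shiftedCauchy 0 z ξ ∂(τ γ)) ∧
        ∫ γ, ∫ ξ, shiftedCauchy 0 z ξ ∂(τ γ) ∂circleHaar = 1 := by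
    intro z hz
    simp_rw [fun γ => hcauchy γ z hz]
    refine ⟨Measurable.ite (measurableSet_eq_fun (by fun_prop) (by fun_prop)) (by fun_prop)
      (by fun_prop), ?_⟩
    have hd : DifferentiableOn ℂ (fun w => (1 - θ z * w)⁻¹) (Metric.closedBall 0 1) :=
      DifferentiableOn.inv (by fun_prop) fun w hw =>
        one_sub_mul_ne_zero (hθ_lt z hz) (by simpa using hw)
    have hm := integral_circleHaar_inv (by fun_prop) hd
    rw [mul_zero, sub_zero, inv_one] at hm
    refine (integral_congr_ae (ae_circleHaar.mono fun γ hγ => ?_)).trans hm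
    simp only [hγ, if_true]
    rw [Complex.inv_eq_conj hγ, mul_comm]
  obtain ⟨h1, h2⟩ := averaging_of_cauchy circleHaar τ hsupp h0 hf
  exact ⟨h1.aemeasurable.congr hae, by rw [← lintegral_congr_ae hae, h2]⟩
end

section
/- (Poltoratski's theorem on nontangential boundary values.) Let σ be a nonzero finite positive Borel measure on 𝕋 and let f ∈ L¹(σ). Then for σ_s-almost every z ∈ 𝕋, the radial limit lim_{r→1⁻} 𝒦_{fσ}(rz)/𝒦_σ(rz) exists and equals f(z), where σ_s denotes the singular part of σ with respect to normalized Lebesgue measure m on 𝕋. -/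
/-!
For a measure `σ` on the circle write `H_g(w) = ∫ g(ξ) (ξ + w) / (ξ - w) dσ(ξ)`, so that `Re H_1` is
the Poisson integral `P_σ`. Since `H_g` is twice the Cauchy transform of `g σ` minus a constant, and
`P_σ(r z) → ∞` at `σ_s`-almost every `z` (`ae_tendsto_poissonInt_top`), it suffices to show that
`φ_g = H_g / H_1` tends radially to `g` almost everywhere on a Lebesgue null set carrying `σ_s`.

For Lipschitz `g` this is elementary: the Herglotz integral of `(g - g(z)) σ` is bounded along the
radius ending at `z` and `|H_1| → ∞` (`tendsto_ratio_of_lipschitz`). The general case needs control of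
the error. For real `g ∈ L²(σ)` the function `S = 2 H_{g²} - H_g² / H_1` is holomorphic in the disk, and
expanding the nonnegative Poisson integral of `(g - Re φ_g / 2)² σ` gives `|φ_g|² P_σ ≤ 2 Re S`. By the
Herglotz representation theorem (`exists_poissonInt_eq`), `Re S = P_τ` for a measure `τ` of mass
`Re S(0) ≤ 2 ∫ g² dσ` (`exists_majorant`). Besicovitch differentiation bounds the upper radial limit
of `P_τ / P_σ` by `dτ / dσ` (`ae_eventually_poissonInt_le`), whence `limsup |φ_g|² ≤ 2 dτ / dσ`, a
function whose `σ`-integral is at most `4 ∫ g² dσ`. Applied to `f - g_n` with `g_n` Lipschitz and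
`∫ (f - g_n)² dσ` summable, this yields the theorem for `f ∈ L²(σ)` (`ae_tendsto_ratio_real`).

Finally, `f ∈ L¹(σ)` is reduced to bounded functions by passing to the measure `(1 + |f|) σ`
(`ae_tendsto_ratio`).
-/

open MeasureTheory Complex Set Filter

namespace Poltoratski

open Metric Topology
open scoped ENNReal NNReal

/-- The Herglotz integral `w ↦ ∫ g(ξ) (ξ + w) / (ξ - w) dσ(ξ)` of the complex measure `g σ`. It is
only used for `σ` carried by the unit circle and `‖w‖ < 1`. -/
noncomputable def herglotzInt (σ : Measure ℂ) (g : ℂ → ℂ) (w : ℂ) : ℂ :=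
  ∫ ξ, g ξ * herglotzRieszKernel 0 w ξ ∂σ

/-- The Poisson integral of `σ` at the point `w` of the disk, with values in `ℝ≥0∞` so that no
integrability has to be carried along. -/
noncomputable def poissonInt (σ : Measure ℂ) (w : ℂ) : ℝ≥0∞ :=
  ∫⁻ ξ, ENNReal.ofReal (poissonKernel 0 w ξ) ∂σ

/-! ### The Herglotz and Poisson kernels on the unit circle -/

lemma one_sub_norm_le {w ξ : ℂ} (hξ : ‖ξ‖ = 1) : 1 - ‖w‖ ≤ ‖ξ - w‖ := by
  have := norm_sub_norm_le ξ w
  linarith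

lemma norm_sub_pos {w ξ : ℂ} (hξ : ‖ξ‖ = 1) (hw : ‖w‖ < 1) : 0 < ‖ξ - w‖ := by
  have := one_sub_norm_le (w := w) hξ
  linarith

lemma norm_sub_radial_sq {x ξ : ℂ} (hx : ‖x‖ = 1) (hξ : ‖ξ‖ = 1) (r : ℝ) :
    ‖ξ - r * x‖ ^ 2 = (1 - r) ^ 2 + r * ‖ξ - x‖ ^ 2 := by
  rw [← Complex.normSq_eq_norm_sq, ← Complex.normSq_eq_norm_sq]
  have h1 : ξ.re * ξ.re + ξ.im * ξ.im = 1 := by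
    rw [← Complex.normSq_apply, Complex.normSq_eq_norm_sq, hξ]; norm_num
  have h2 : x.re * x.re + x.im * x.im = 1 := by
    rw [← Complex.normSq_apply, Complex.normSq_eq_norm_sq, hx]; norm_num
  simp only [Complex.normSq_apply, Complex.sub_re, Complex.sub_im, Complex.re_ofReal_mul,
    Complex.im_ofReal_mul]
  linear_combination (1 - r) * h1 + (r ^ 2 - r) * h2

/-- The radius `[0, x)` approaches `x` nontangentially, so on the circle the distance to `x` is
controlled by the distance to `r x`. This is what cancels the pole of the Herglotz kernel against
a Lipschitz function. -/
lemma norm_sub_le_two_mul {x ξ : ℂ} (hx : ‖x‖ = 1) (hξ : ‖ξ‖ = 1) {r : ℝ} (h0 : 0 ≤ r) (h1 : r < 1) :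
    ‖ξ - x‖ ≤ 2 * ‖ξ - r * x‖ := by
  have e : ξ - x = (ξ - r * x) - ((1 - r : ℝ) : ℂ) * x := by push_cast; ring
  have h2 : 1 - r ≤ ‖ξ - r * x‖ := by
    have h := norm_sub_norm_le ξ (r * x)
    rw [norm_mul, hx, hξ, Complex.norm_real, Real.norm_eq_abs, mul_one] at h
    rwa [abs_of_nonneg h0] at h
  calc ‖ξ - x‖ ≤ ‖ξ - r * x‖ + ‖((1 - r : ℝ) : ℂ) * x‖ := by rw [e]; exact norm_sub_le _ _
    _ ≤ 2 * ‖ξ - r * x‖ := by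
      rw [norm_mul, hx, Complex.norm_real, Real.norm_eq_abs, abs_of_pos (by linarith)]
      linarith

lemma poissonKernel_nonneg {w ξ : ℂ} (hξ : ‖ξ‖ = 1) (hw : ‖w‖ < 1) :
    0 ≤ poissonKernel 0 w ξ := by
  rw [poissonKernel_def]
  simp only [sub_zero, hξ]
  have : ‖w‖ ^ 2 ≤ 1 := by nlinarith [norm_nonneg w]
  apply div_nonneg (by linarith) (by positivity)

lemma poissonKernel_pos {w ξ : ℂ} (hξ : ‖ξ‖ = 1) (hw : ‖w‖ < 1) :
    0 < poissonKernel 0 w ξ := by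
  rw [poissonKernel_def]
  simp only [sub_zero, hξ]
  have : ‖w‖ ^ 2 < 1 := by nlinarith [norm_nonneg w]
  exact div_pos (by linarith) (pow_pos (norm_sub_pos hξ hw) 2)

lemma poissonKernel_radial {x ξ : ℂ} (hx : ‖x‖ = 1) (hξ : ‖ξ‖ = 1) (r : ℝ) :
    poissonKernel 0 (r * x) ξ = (1 - r ^ 2) / ((1 - r) ^ 2 + r * ‖ξ - x‖ ^ 2) := by
  rw [poissonKernel_def, ← norm_sub_radial_sq hx hξ]
  simp [hx, hξ]

lemma measurable_herglotz (w : ℂ) : Measurable (herglotzRieszKernel 0 w) := by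
  rw [herglotzRieszKernel_fun_def]; fun_prop

lemma measurable_poissonKernel (w : ℂ) : Measurable (poissonKernel 0 w) := by
  rw [poissonKernel_eq_re_herglotzRieszKernel]
  exact Complex.measurable_re.comp (measurable_herglotz w)

lemma norm_herglotz_le {w ξ : ℂ} (hξ : ‖ξ‖ = 1) (hw : ‖w‖ < 1) :
    ‖herglotzRieszKernel 0 w ξ‖ ≤ 2 / ‖ξ - w‖ := by
  rw [herglotzRieszKernel_def, norm_div]
  simp only [sub_zero]
  gcongr
  calc ‖ξ + w‖ ≤ ‖ξ‖ + ‖w‖ := norm_add_le _ _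
    _ ≤ 2 := by linarith

lemma norm_herglotz_le' {w ξ : ℂ} (hξ : ‖ξ‖ = 1) (hw : ‖w‖ < 1) :
    ‖herglotzRieszKernel 0 w ξ‖ ≤ 2 / (1 - ‖w‖) := by
  refine (norm_herglotz_le hξ hw).trans ?_
  have h := one_sub_norm_le (w := w) hξ
  have : 0 < 1 - ‖w‖ := by linarith
  gcongr

lemma ae_norm_eq_one {σ : Measure ℂ} (hσ : σ (sphere (0 : ℂ) 1)ᶜ = 0) :
    ∀ᵐ ξ ∂σ, ‖ξ‖ = 1 := by
  have : ∀ᵐ ξ ∂σ, ξ ∈ sphere (0 : ℂ) 1 := hσ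
  simpa using this

/-! ### Comparison of Poisson integrals from comparison of balls -/

lemma norm_radial_lt {x : ℂ} (hx : ‖x‖ = 1) {r : ℝ} (hr0 : 0 < r) (hr1 : r < 1) :
    ‖(r * x : ℂ)‖ < 1 := by
  rw [norm_mul, hx, Complex.norm_real, Real.norm_eq_abs, abs_of_pos hr0]; linarith

/-- The Poisson kernel at `r x` is a decreasing function of the distance to `x`, so by the layer cake
formula its integral only sees the masses of the balls centred at `x`. -/
lemma poissonInt_le_of_ball {μ ν : Measure ℂ}
    (hμ : μ (sphere (0 : ℂ) 1)ᶜ = 0) (hν : ν (sphere (0 : ℂ) 1)ᶜ = 0) {x : ℂ} (hx : ‖x‖ = 1)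
    {C : ℝ≥0∞} (hCt : C ≠ ⊤) (hC : ∀ t, 0 < t → ν (ball x t) ≤ C * μ (ball x t))
    {r : ℝ} (hr0 : 0 < r) (hr1 : r < 1) :
    poissonInt ν (r * x) ≤ C * poissonInt μ (r * x) := by
  have hw := norm_radial_lt hx hr0 hr1
  have layer : ∀ ρ : Measure ℂ, ρ (sphere (0 : ℂ) 1)ᶜ = 0 → poissonInt ρ (r * x) =
      ∫⁻ s in Ioi (0 : ℝ), ρ (ball x (√(((1 - r ^ 2) / s - (1 - r) ^ 2) / r))) := by
    intro ρ hρ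
    unfold poissonInt
    rw [lintegral_eq_lintegral_meas_lt]
    · refine setLIntegral_congr_fun measurableSet_Ioi fun s hs ↦ measure_congr ?_
      filter_upwards [ae_norm_eq_one hρ] with ξ hξ
      apply propext
      change s < poissonKernel 0 (r * x) ξ ↔ dist ξ x < _
      have hs : 0 < s := hs
      have hpos : 0 < (1 - r) ^ 2 + r * ‖ξ - x‖ ^ 2 := by
        have : 0 < (1 - r) ^ 2 := by apply pow_pos; linarith
        positivity
      rw [dist_eq_norm, Real.lt_sqrt (norm_nonneg _), poissonKernel_radial hx hξ,
        lt_div_iff₀ hpos, lt_div_iff₀ hr0, lt_sub_iff_add_lt (a := ‖ξ - x‖ ^ 2 * r), lt_div_iff₀ hs]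
      constructor <;> intro h <;> nlinarith
    · filter_upwards [ae_norm_eq_one hρ] with ξ hξ
      exact poissonKernel_nonneg hξ hw
    · exact (measurable_poissonKernel _).aemeasurable
  rw [layer μ hμ, layer ν hν, ← lintegral_const_mul' _ _ hCt]
  refine lintegral_mono fun s ↦ ?_
  rcases (Real.sqrt_nonneg (((1 - r ^ 2) / s - (1 - r) ^ 2) / r)).eq_or_lt with h | h
  · simp [← h]
  · exact hC _ h

/-- Local form of `poissonInt_le_of_ball`: only balls of radius below `δ` are compared, and the mass
of `ν` at distance at least `δ` contributes a term that vanishes as `r → 1`. -/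
lemma poissonInt_le_of_closedBall {μ ν : Measure ℂ}
    (hμ : μ (sphere (0 : ℂ) 1)ᶜ = 0) (hν : ν (sphere (0 : ℂ) 1)ᶜ = 0) {x : ℂ} (hx : ‖x‖ = 1)
    {C : ℝ≥0∞} (hCt : C ≠ ⊤) {δ : ℝ} (hδ : 0 < δ)
    (hC : ∀ t, 0 < t → t < δ → ν (closedBall x t) ≤ C * μ (closedBall x t))
    {r : ℝ} (hr0 : 0 < r) (hr1 : r < 1) :
    poissonInt ν (r * x) ≤
      C * poissonInt μ (r * x) + ENNReal.ofReal ((1 - r ^ 2) / (r * δ ^ 2)) * ν univ := by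
  -- Open balls are increasing unions of closed balls.
  have hopen : ∀ t, 0 < t → t ≤ δ → ν (ball x t) ≤ C * μ (ball x t) := by
    intro t ht htδ
    obtain ⟨u, hu_mono, hu_lt, hu_lim⟩ := exists_seq_strictMono_tendsto' ht
    have hU : ball x t = ⋃ n, closedBall x (u n) := by
      ext y
      simp only [mem_ball, mem_iUnion, mem_closedBall]
      constructor
      · intro hy
        obtain ⟨n, hn⟩ := (hu_lim.eventually (lt_mem_nhds hy)).exists
        exact ⟨n, hn.le⟩
      · rintro ⟨n, hn⟩
        exact hn.trans_lt (hu_lt n).2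
    have hmono : Monotone fun n ↦ closedBall x (u n) :=
      fun m n h ↦ closedBall_subset_closedBall (hu_mono.monotone h)
    rw [hU, hmono.measure_iUnion]
    refine iSup_le fun n ↦ ?_
    refine (hC _ (hu_lt n).1 ((hu_lt n).2.trans_le htδ)).trans ?_
    gcongr
    exact subset_iUnion (fun n ↦ closedBall x (u n)) n
  have hsplit : poissonInt ν (r * x) =
      poissonInt (ν.restrict (ball x δ)) (r * x) + poissonInt (ν.restrict (ball x δ)ᶜ) (r * x) := by
    unfold poissonInt
    rw [lintegral_add_compl _ measurableSet_ball]
  rw [hsplit]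
  refine add_le_add ?_ ?_
  · refine poissonInt_le_of_ball hμ (by
      exact le_antisymm ((Measure.restrict_apply_le _ _).trans hν.le) zero_le) hx hCt ?_ hr0 hr1
    intro t ht
    rw [Measure.restrict_apply measurableSet_ball]
    have : ball x t ∩ ball x δ = ball x (min t δ) := by
      ext y; simp
    rw [this]
    refine (hopen _ (lt_min ht hδ) (min_le_right _ _)).trans ?_
    gcongr
    exact min_le_left _ _
  · unfold poissonInt
    calc ∫⁻ ξ in (ball x δ)ᶜ, ENNReal.ofReal (poissonKernel 0 (r * x) ξ) ∂ν
        ≤ ∫⁻ ξ in (ball x δ)ᶜ, ENNReal.ofReal ((1 - r ^ 2) / (r * δ ^ 2)) ∂ν := by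
          refine setLIntegral_mono_ae (by fun_prop) ?_
          filter_upwards [ae_norm_eq_one hν] with ξ hξ hξδ
          apply ENNReal.ofReal_le_ofReal
          rw [poissonKernel_radial hx hξ]
          have h1 : δ ≤ ‖ξ - x‖ := by simpa [dist_eq_norm] using hξδ
          have h2 : 0 ≤ 1 - r ^ 2 := by nlinarith
          gcongr
          nlinarith [sq_nonneg (1 - r), mul_le_mul h1 h1 hδ.le (norm_nonneg _)]
      _ ≤ ENNReal.ofReal ((1 - r ^ 2) / (r * δ ^ 2)) * ν univ := by
          rw [setLIntegral_const]
          gcongr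
          exact subset_univ _

/-! ### Poisson integrals and normalized Lebesgue measure -/

instance isProbabilityMeasure_circleHaar : IsProbabilityMeasure circleHaar := by
  constructor
  unfold circleHaar
  rw [Measure.smul_apply, Measure.map_apply (measurable_circleMap 0 1) MeasurableSet.univ]
  simp only [preimage_univ, Measure.restrict_apply_univ, Real.volume_Ioc, sub_zero, smul_eq_mul]
  rw [← ENNReal.ofReal_mul (by positivity), inv_mul_cancel₀ (by positivity), ENNReal.ofReal_one]

lemma circleHaar_compl_sphere : circleHaar (sphere (0 : ℂ) 1)ᶜ = 0 := by
  unfold circleHaar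
  rw [Measure.smul_apply, Measure.map_apply (measurable_circleMap 0 1)
    isClosed_sphere.measurableSet.compl]
  have : circleMap 0 1 ⁻¹' (sphere (0 : ℂ) 1)ᶜ = ∅ := by
    ext θ; simp
  simp [this]

lemma integral_circleHaar {g : ℂ → ℝ} (hg : Measurable g) :
    ∫ ξ, g ξ ∂circleHaar = Real.circleAverage g 0 1 := by
  unfold circleHaar
  rw [integral_smul_measure, integral_map (measurable_circleMap 0 1).aemeasurable
    hg.aestronglyMeasurable, Real.circleAverage_def,
    intervalIntegral.integral_of_le (by positivity), ENNReal.toReal_ofReal (by positivity)]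

lemma poissonInt_eq_ofReal {σ : Measure ℂ} [IsFiniteMeasure σ]
    (hσ : σ (sphere (0 : ℂ) 1)ᶜ = 0) {w : ℂ} (hw : ‖w‖ < 1) :
    poissonInt σ w = ENNReal.ofReal (∫ ξ, poissonKernel 0 w ξ ∂σ) := by
  rw [ofReal_integral_eq_lintegral_ofReal]
  · rfl
  · refine Integrable.of_bound (measurable_poissonKernel w).aestronglyMeasurable
      (2 / (1 - ‖w‖)) ?_
    filter_upwards [ae_norm_eq_one hσ] with ξ hξ
    rw [poissonKernel_eq_re_herglotzRieszKernel]
    exact (Complex.abs_re_le_norm _).trans (norm_herglotz_le' hξ hw)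
  · filter_upwards [ae_norm_eq_one hσ] with ξ hξ
    exact poissonKernel_nonneg hξ hw

lemma poissonInt_circleHaar {w : ℂ} (hw : ‖w‖ < 1) : poissonInt circleHaar w = 1 := by
  rw [poissonInt_eq_ofReal circleHaar_compl_sphere hw, integral_circleHaar
    (measurable_poissonKernel w)]
  have h : InnerProductSpace.HarmonicOnNhd (fun _ : ℂ ↦ (1 : ℝ)) (closedBall (0 : ℂ) 1) :=
    fun x _ ↦ InnerProductSpace.harmonicAt_const _
  have := h.circleAverage_poissonKernel_smul (w := w) (by simpa using hw)
  have e : poissonKernel 0 w • (fun _ : ℂ ↦ (1 : ℝ)) = poissonKernel 0 w := by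
    ext; simp
  rw [e] at this
  simp [this]

/-! ### Radial behaviour of Poisson integrals at points of a Lebesgue null set -/

/-- Besicovitch differentiation of `ν` with respect to `μ`. -/
lemma ae_eventually_closedBall_le (ν μ : Measure ℂ) [IsFiniteMeasure ν] [IsFiniteMeasure μ] :
    ∀ᵐ x ∂μ, ∀ C : ℝ≥0∞, C ≠ ⊤ → ν.rnDeriv μ x < C →
      ∃ δ > 0, ∀ t, 0 < t → t < δ → ν (closedBall x t) ≤ C * μ (closedBall x t) := by
  filter_upwards [Besicovitch.ae_tendsto_rnDeriv ν μ] with x hx C hCt hC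
  have h := hx.eventually (gt_mem_nhds hC)
  obtain ⟨δ, hδ, hsub⟩ := mem_nhdsGT_iff_exists_Ioo_subset.1 h
  refine ⟨δ, hδ, fun t ht htδ ↦ ?_⟩
  have h1 : ν (closedBall x t) / μ (closedBall x t) < C := hsub ⟨ht, htδ⟩
  exact (ENNReal.div_le_iff_le_mul (Or.inr hCt) (Or.inl (measure_ne_top _ _))).1 h1.le

lemma tendsto_ofReal_tail (δ : ℝ) (hδ : 0 < δ) {M : ℝ≥0∞} (hM : M ≠ ⊤) :
    Tendsto (fun r : ℝ ↦ ENNReal.ofReal ((1 - r ^ 2) / (r * δ ^ 2)) * M) (𝓝[<] 1) (𝓝 0) := by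
  have h : Tendsto (fun r : ℝ ↦ (1 - r ^ 2) / (r * δ ^ 2)) (𝓝[<] 1) (𝓝 0) := by
    have : ContinuousAt (fun r : ℝ ↦ (1 - r ^ 2) / (r * δ ^ 2)) 1 := by
      apply ContinuousAt.div (by fun_prop) (by fun_prop)
      positivity
    have h2 := this.tendsto.mono_left (nhdsWithin_le_nhds (s := Iio 1))
    simpa using h2
  have h3 := ENNReal.Tendsto.mul_const (ENNReal.tendsto_ofReal h) (Or.inr hM)
  simpa using h3

lemma eventually_mem_Ioo : ∀ᶠ r : ℝ in 𝓝[<] 1, 0 < r ∧ r < 1 :=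
  Ioo_mem_nhdsLT (by norm_num)

/-- On a Lebesgue null set the derivative of Lebesgue measure with respect to `σ` vanishes `σ`-almost
everywhere. Comparing with the Poisson integral of Lebesgue measure, which is identically `1`, shows
that the Poisson integral of `σ` blows up. -/
lemma ae_tendsto_poissonInt_top {σ : Measure ℂ} [IsFiniteMeasure σ]
    (hσ : σ (sphere (0 : ℂ) 1)ᶜ = 0) {A : Set ℂ} (hmA : circleHaar A = 0) :
    ∀ᵐ x ∂σ.restrict A, Tendsto (fun r : ℝ ↦ poissonInt σ (r * x)) (𝓝[<] 1) (𝓝 ⊤) := by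
  have hzero : ∀ᵐ x ∂σ.restrict A, circleHaar.rnDeriv σ x = 0 := by
    have h1 : ∫⁻ x in A, circleHaar.rnDeriv σ x ∂σ = 0 :=
      le_antisymm ((Measure.setLIntegral_rnDeriv_le A).trans hmA.le) zero_le
    rwa [lintegral_eq_zero_iff (Measure.measurable_rnDeriv _ _)] at h1
  filter_upwards [hzero, ae_restrict_of_ae (ae_eventually_closedBall_le circleHaar σ),
    ae_restrict_of_ae (ae_norm_eq_one hσ)] with x h0 hx hx1
  rw [ENNReal.tendsto_nhds_top_iff_nnreal]
  intro N
  -- If `P_σ (r x) ≤ N`, then comparing with `C = 1 / (2 (N + 1))` gives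
  -- `1 = P_m (r x) ≤ C (N + 1) + tail < 1 / 2 + 1 / 2` as soon as the tail is below `1 / 2`.
  set C : ℝ≥0∞ := (2 * ((N : ℝ≥0∞) + 1))⁻¹ with hCdef
  have hCpos : 0 < C := by
    rw [hCdef, ENNReal.inv_pos]; finiteness
  have hCt : C ≠ ⊤ := by
    rw [hCdef, ENNReal.inv_ne_top]; simp
  obtain ⟨δ, hδ, hball⟩ := hx C hCt (by rwa [h0])
  have htail := tendsto_ofReal_tail δ hδ (M := circleHaar univ) (by simp)
  have hev := htail.eventually (gt_mem_nhds (show (0 : ℝ≥0∞) < 2⁻¹ by simp))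
  filter_upwards [hev, eventually_mem_Ioo] with r hr hr01
  have h1 := poissonInt_le_of_closedBall hσ circleHaar_compl_sphere hx1 hCt hδ hball hr01.1 hr01.2
  rw [poissonInt_circleHaar (norm_radial_lt hx1 hr01.1 hr01.2)] at h1
  by_contra hcon
  push Not at hcon
  have h2 : C * poissonInt σ (r * x) ≤ 2⁻¹ := by
    calc C * poissonInt σ (r * x) ≤ C * (N + 1) := by
          gcongr; exact hcon.trans le_self_add
      _ = 2⁻¹ := by
          rw [hCdef, ENNReal.mul_inv (by simp) (by simp), mul_assoc,
            ENNReal.inv_mul_cancel (by simp) (by finiteness), mul_one]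
  have h3 : (1 : ℝ≥0∞) < 2⁻¹ + 2⁻¹ := by
    refine h1.trans_lt (ENNReal.add_lt_add_of_le_of_lt ?_ h2 hr)
    exact (h2.trans_lt (by simp)).ne
  simp [ENNReal.inv_two_add_inv_two] at h3

/-- Almost everywhere on a Lebesgue null set, the upper radial limit of `P_τ / P_σ` is at most
`dτ / dσ`; the tail term of `poissonInt_le_of_closedBall` is absorbed because `P_σ → ∞`. -/
lemma ae_eventually_poissonInt_le {σ τ : Measure ℂ} [IsFiniteMeasure σ] [IsFiniteMeasure τ]
    (hσ : σ (sphere (0 : ℂ) 1)ᶜ = 0) (hτ : τ (sphere (0 : ℂ) 1)ᶜ = 0)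
    {A : Set ℂ} (hmA : circleHaar A = 0) :
    ∀ᵐ x ∂σ.restrict A, ∀ C : ℝ≥0∞, C ≠ ⊤ → τ.rnDeriv σ x < C →
      ∀ᶠ r : ℝ in 𝓝[<] 1, poissonInt τ (r * x) ≤ C * poissonInt σ (r * x) := by
  filter_upwards [ae_tendsto_poissonInt_top hσ hmA,
    ae_restrict_of_ae (ae_eventually_closedBall_le τ σ),
    ae_restrict_of_ae (ae_norm_eq_one hσ)] with x htop hx hx1 C hCt hC
  obtain ⟨C', hC1, hC2⟩ := exists_between hC
  obtain ⟨δ, hδ, hball⟩ := hx C' hC2.ne_top hC1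
  have htail := tendsto_ofReal_tail δ hδ (M := τ univ) (by simp)
  filter_upwards [htail.eventually (gt_mem_nhds (tsub_pos_of_lt hC2)), eventually_mem_Ioo,
    htop.eventually (lt_mem_nhds (ENNReal.one_lt_top))] with r hr hr01 hr1
  calc poissonInt τ (r * x) ≤ C' * poissonInt σ (r * x) +
        ENNReal.ofReal ((1 - r ^ 2) / (r * δ ^ 2)) * τ univ :=
      poissonInt_le_of_closedBall hσ hτ hx1 hC2.ne_top hδ hball hr01.1 hr01.2
    _ ≤ C' * poissonInt σ (r * x) + (C - C') * poissonInt σ (r * x) := by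
      refine add_le_add le_rfl ?_
      exact hr.le.trans (le_mul_of_one_le_right' hr1.le)
    _ = C * poissonInt σ (r * x) := by
      rw [← add_mul, add_tsub_cancel_of_le hC2.le]

/-! ### The Herglotz representation theorem -/

/-- Herglotz representation: a nonnegative real part of a holomorphic function on the disk is the
Poisson integral of a finite measure on the circle. The measure is a weak limit of the measures
`Re S (ρ ξ) dm(ξ)` as `ρ → 1`, all of which have mass `Re S 0`. -/
lemma exists_poissonInt_eq {S : ℂ → ℂ} (hS : DifferentiableOn ℂ S (ball 0 1))
    (hpos : ∀ w : ℂ, ‖w‖ < 1 → 0 ≤ (S w).re) :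
    ∃ τ : Measure ℂ, IsFiniteMeasure τ ∧ τ (sphere (0 : ℂ) 1)ᶜ = 0 ∧
      ∀ w : ℂ, ‖w‖ < 1 → poissonInt τ w = ENNReal.ofReal (S w).re := by
  -- Composing with the retraction `ξ ↦ ξ / max 1 ‖ξ‖` of `ℂ` onto the closed disk turns
  -- `ξ ↦ Re S (ρ ξ)` into a function `u ρ` that is continuous and nonnegative on all of `ℂ`.
  have hproj_le : ∀ ξ : ℂ, ‖ξ / ((max 1 ‖ξ‖ : ℝ) : ℂ)‖ ≤ 1 := by
    intro ξ
    have h1 : (0 : ℝ) < max 1 ‖ξ‖ := by positivity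
    rw [norm_div, Complex.norm_real, Real.norm_eq_abs, abs_of_pos h1, div_le_one h1]
    exact le_max_right _ _
  have hproj_eq : ∀ ξ : ℂ, ‖ξ‖ = 1 → ξ / ((max 1 ‖ξ‖ : ℝ) : ℂ) = ξ := by
    intro ξ hξ; simp [hξ]
  set u : ℝ → ℂ → ℝ := fun ρ ξ ↦ (S (ρ * (ξ / ((max 1 ‖ξ‖ : ℝ) : ℂ)))).re with hu
  have hmul_lt : ∀ ρ ∈ Ioo (0 : ℝ) 1, ∀ z : ℂ, ‖z‖ ≤ 1 → ‖(ρ * z : ℂ)‖ < 1 := by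
    intro ρ hρ z hz
    rw [norm_mul, Complex.norm_real, Real.norm_eq_abs, abs_of_pos hρ.1]
    nlinarith [hρ.1, hρ.2, norm_nonneg z]
  have hu_cont : ∀ ρ ∈ Ioo (0 : ℝ) 1, Continuous (u ρ) := by
    intro ρ hρ
    apply Complex.continuous_re.comp
    refine hS.continuousOn.comp_continuous ?_ ?_
    · refine continuous_const.mul (continuous_id.div ?_ ?_)
      · exact Complex.continuous_ofReal.comp (continuous_const.max continuous_norm)
      · intro ξ
        have h1 : (0 : ℝ) < max 1 ‖ξ‖ := by positivity
        exact_mod_cast h1.ne'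
    · intro ξ
      simpa using hmul_lt ρ hρ _ (hproj_le ξ)
  have hu_nonneg : ∀ ρ ∈ Ioo (0 : ℝ) 1, ∀ ξ, 0 ≤ u ρ ξ := fun ρ hρ ξ ↦
    hpos _ (hmul_lt ρ hρ _ (hproj_le ξ))
  have hharm : ∀ ρ ∈ Ioo (0 : ℝ) 1,
      InnerProductSpace.HarmonicOnNhd (fun z : ℂ ↦ (S (ρ * z)).re) (closedBall (0 : ℂ) 1) := by
    intro ρ hρ z hz
    have hz' : ‖(ρ * z : ℂ)‖ < 1 := hmul_lt ρ hρ z (by simpa using hz)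
    have h1 : AnalyticAt ℂ S (ρ * z) := hS.analyticAt (isOpen_ball.mem_nhds (by simpa using hz'))
    have h2 : AnalyticAt ℂ (fun z : ℂ ↦ S (ρ * z)) z :=
      AnalyticAt.fun_comp h1 (by fun_prop)
    exact h2.harmonicAt_re
  -- The approximating measures, with density `Re S (ρ ξ)`.
  set ν : ℝ → Measure ℂ := fun ρ ↦
    circleHaar.withDensity (fun ξ ↦ ((u ρ ξ).toNNReal : ℝ≥0∞)) with hν
  have hν_mass : ∀ ρ ∈ Ioo (0 : ℝ) 1, ν ρ univ = ENNReal.ofReal (S 0).re := by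
    intro ρ hρ
    have hbound : Integrable (u ρ) circleHaar := by
      have hb := (isCompact_sphere (0 : ℂ) 1).exists_bound_of_continuousOn
        (hu_cont ρ hρ).continuousOn
      obtain ⟨M, hM⟩ := hb
      refine Integrable.of_bound (hu_cont ρ hρ).aestronglyMeasurable M ?_
      filter_upwards [ae_norm_eq_one circleHaar_compl_sphere] with ξ hξ
      exact hM ξ (by simpa using hξ)
    calc ν ρ univ = ∫⁻ ξ, ENNReal.ofReal (u ρ ξ) ∂circleHaar := by
          rw [hν]; simp [withDensity_apply, ENNReal.ofReal]
      _ = ENNReal.ofReal (∫ ξ, u ρ ξ ∂circleHaar) :=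
          (ofReal_integral_eq_lintegral_ofReal hbound (.of_forall (hu_nonneg ρ hρ))).symm
      _ = ENNReal.ofReal (S 0).re := by
          rw [integral_circleHaar (hu_cont ρ hρ).measurable]
          have h1 : Real.circleAverage (u ρ) 0 1 =
              Real.circleAverage (fun z : ℂ ↦ (S (ρ * z)).re) 0 1 := by
            apply Real.circleAverage_congr_sphere
            intro ξ hξ
            simp only [hu]
            rw [hproj_eq ξ (by simpa using hξ)]
          rw [h1, InnerProductSpace.HarmonicOnNhd.circleAverage_eq (by simpa using hharm ρ hρ)]
          simp
  have hν_sphere : ∀ ρ, ν ρ (sphere (0 : ℂ) 1)ᶜ = 0 := fun ρ ↦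
    withDensity_absolutelyContinuous _ _ circleHaar_compl_sphere
  -- A bounded continuous extension of the Poisson kernel from the circle.
  have hG : ∀ w : ℂ, ‖w‖ < 1 → ∃ G : BoundedContinuousFunction ℂ ℝ,
      ∀ ξ, ‖ξ‖ = 1 → G ξ = poissonKernel 0 w ξ := by
    intro w hw
    have hpos' : ∀ ξ : ℂ, 0 < max (1 - ‖w‖) ‖ξ - w‖ := fun ξ ↦
      lt_max_of_lt_left (by linarith)
    have hc : Continuous fun ξ : ℂ ↦ (1 - ‖w‖ ^ 2) / (max (1 - ‖w‖) ‖ξ - w‖) ^ 2 := by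
      refine continuous_const.div (by fun_prop) fun ξ ↦ (pow_pos (hpos' ξ) 2).ne'
    have hb : ∀ ξ : ℂ, ‖(1 - ‖w‖ ^ 2) / (max (1 - ‖w‖) ‖ξ - w‖) ^ 2‖ ≤
        (1 - ‖w‖ ^ 2) / (1 - ‖w‖) ^ 2 := by
      intro ξ
      have h1 : 0 ≤ 1 - ‖w‖ ^ 2 := by nlinarith [norm_nonneg w]
      have h2 : 0 < 1 - ‖w‖ := by linarith
      rw [Real.norm_eq_abs, abs_of_nonneg (by positivity)]
      gcongr
      exact le_max_left _ _
    refine ⟨BoundedContinuousFunction.ofNormedAddCommGroup _ hc _ hb, fun ξ hξ ↦ ?_⟩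
    change (1 - ‖w‖ ^ 2) / (max (1 - ‖w‖) ‖ξ - w‖) ^ 2 = _
    rw [max_eq_right (one_sub_norm_le hξ), poissonKernel_def]
    simp [hξ]
  have hν_int : ∀ ρ ∈ Ioo (0 : ℝ) 1, ∀ w : ℂ, ‖w‖ < 1 → ∀ G : BoundedContinuousFunction ℂ ℝ,
      (∀ ξ, ‖ξ‖ = 1 → G ξ = poissonKernel 0 w ξ) → ∫ ξ, G ξ ∂(ν ρ) = (S (ρ * w)).re := by
    intro ρ hρ w hw G hG
    rw [hν, integral_withDensity_eq_integral_smul (hu_cont ρ hρ).measurable.real_toNNReal,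
      integral_circleHaar]
    · rw [← (hharm ρ hρ).circleAverage_poissonKernel_smul (w := w) (by simpa using hw)]
      apply Real.circleAverage_congr_sphere
      intro ξ hξ
      have hξ : ‖ξ‖ = 1 := by simpa using hξ
      have h1 := hu_nonneg ρ hρ ξ
      simp only [NNReal.smul_def, Real.coe_toNNReal _ h1, hG ξ hξ, Pi.smul_apply', smul_eq_mul]
      simp only [hu]
      rw [hproj_eq ξ hξ, mul_comm]
    · exact ((hu_cont ρ hρ).measurable.real_toNNReal).smul G.continuous.measurable
  -- Weak compactness of measures of bounded mass on the circle.
  set ρ : ℕ → ℝ := fun n ↦ 1 - 1 / ((n : ℝ) + 2) with hρdef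
  have hρ : ∀ n, ρ n ∈ Ioo (0 : ℝ) 1 := by
    intro n
    have h1 : (0 : ℝ) < (n : ℝ) + 2 := by positivity
    have h2 : 1 / ((n : ℝ) + 2) < 1 := by rw [div_lt_one h1]; linarith [n.cast_nonneg (α := ℝ)]
    have h3 : 0 < 1 / ((n : ℝ) + 2) := by positivity
    constructor <;> simp only [hρdef] <;> linarith
  have hρ_lim : Tendsto ρ atTop (𝓝 1) := by
    have h1 : Tendsto (fun n : ℕ ↦ 1 / ((n : ℝ) + 2)) atTop (𝓝 0) :=
      tendsto_const_nhds.div_atTop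
        (tendsto_atTop_add_const_right _ _ tendsto_natCast_atTop_atTop)
    simpa [hρdef] using h1.const_sub 1
  let F : ℕ → FiniteMeasure ℂ := fun n ↦ ⟨ν (ρ n), ⟨by rw [hν_mass _ (hρ n)]; finiteness⟩⟩
  have hK := isCompact_setOfPred_finiteMeasure_le_of_isCompact (E := ℂ)
    (S 0).re.toNNReal (isCompact_sphere (0 : ℂ) 1)
  obtain ⟨τ, hτ, hlim⟩ := hK.ultrafilter_le_nhds' ((hyperfilter ℕ).map F) (by
    rw [Ultrafilter.mem_map]
    refine Filter.univ_mem' fun n ↦ ?_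
    refine ⟨?_, ?_⟩
    · rw [← ENNReal.coe_le_coe, FiniteMeasure.ennreal_mass]
      exact (hν_mass _ (hρ n)).le
    · rw [FiniteMeasure.null_iff_toMeasure_null]
      exact hν_sphere _)
  have hτs : (τ : Measure ℂ) (sphere (0 : ℂ) 1)ᶜ = 0 :=
    (FiniteMeasure.null_iff_toMeasure_null _ _).1 hτ.2
  refine ⟨τ, inferInstance, hτs, fun w hw ↦ ?_⟩
  obtain ⟨G, hGw⟩ := hG w hw
  have hlim' : Tendsto F (hyperfilter ℕ) (𝓝 τ) := hlim
  have h1 := FiniteMeasure.tendsto_iff_forall_integral_tendsto.1 hlim' G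
  have h2 : Tendsto (fun n ↦ (S (ρ n * w)).re) (hyperfilter ℕ) (𝓝 (S w).re) := by
    have hc : ContinuousAt S w :=
      hS.continuousOn.continuousAt (isOpen_ball.mem_nhds (by simpa using hw))
    have h3 : Tendsto (fun n ↦ (ρ n : ℂ) * w) atTop (𝓝 w) := by
      have := (Complex.continuous_ofReal.tendsto 1).comp hρ_lim
      simpa using! this.mul_const w
    have h4 := (Complex.continuous_re.tendsto _).comp (hc.tendsto.comp h3)
    exact h4.mono_left Nat.hyperfilter_le_atTop
  have h3 : ∫ ξ, G ξ ∂(τ : Measure ℂ) = (S w).re := by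
    refine tendsto_nhds_unique h1 (h2.congr fun n ↦ ?_)
    exact (hν_int _ (hρ n) w hw G hGw).symm
  rw [poissonInt_eq_ofReal hτs hw, ← h3]
  congr 1
  apply integral_congr_ae
  filter_upwards [ae_norm_eq_one hτs] with ξ hξ
  exact (hGw ξ hξ).symm

/-! ### Herglotz integrals and the majorant of the ratio -/

lemma integrable_mul_herglotz {σ : Measure ℂ} (hσ : σ (sphere (0 : ℂ) 1)ᶜ = 0) {g : ℂ → ℂ}
    (hg : Integrable g σ) {w : ℂ} (hw : ‖w‖ < 1) :
    Integrable (fun ξ ↦ g ξ * herglotzRieszKernel 0 w ξ) σ := by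
  refine hg.mul_bdd (c := 2 / (1 - ‖w‖)) (measurable_herglotz w).aestronglyMeasurable ?_
  filter_upwards [ae_norm_eq_one hσ] with ξ hξ
  exact norm_herglotz_le' hξ hw

lemma differentiableOn_herglotzInt {σ : Measure ℂ} (hσ : σ (sphere (0 : ℂ) 1)ᶜ = 0)
    {g : ℂ → ℂ} (hg : Integrable g σ) :
    DifferentiableOn ℂ (herglotzInt σ g) (ball 0 1) := by
  intro w₀ hw₀
  have hw₀ : ‖w₀‖ < 1 := by simpa using hw₀
  set ε : ℝ := (1 - ‖w₀‖) / 2 with hε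
  have hεpos : 0 < ε := by rw [hε]; linarith
  have hball : ∀ w ∈ ball w₀ ε, ‖w‖ < 1 - ε := by
    intro w hw
    have h1 : ‖w - w₀‖ < ε := by simpa [dist_eq_norm] using hw
    have h2 : ‖w‖ ≤ ‖w₀‖ + ‖w - w₀‖ := by
      calc ‖w‖ = ‖w₀ + (w - w₀)‖ := by ring_nf
        _ ≤ _ := norm_add_le _ _
    rw [hε] at h1 ⊢
    linarith
  refine DifferentiableAt.differentiableWithinAt ?_
  have := hasDerivAt_integral_of_dominated_loc_of_deriv_le (μ := σ) (𝕜 := ℂ)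
    (F := fun w ξ ↦ g ξ * herglotzRieszKernel 0 w ξ)
    (F' := fun w ξ ↦ g ξ * (2 * ξ / (ξ - w) ^ 2)) (x₀ := w₀) (s := ball w₀ ε)
    (bound := fun ξ ↦ ‖g ξ‖ * (2 / ε ^ 2)) (ball_mem_nhds _ hεpos) ?_
    (integrable_mul_herglotz hσ hg hw₀) ?_ ?_ (hg.norm.mul_const _) ?_
  · exact this.2.differentiableAt
  · exact .of_forall fun w ↦
      hg.aestronglyMeasurable.mul (measurable_herglotz w).aestronglyMeasurable
  · refine hg.aestronglyMeasurable.mul (Measurable.aestronglyMeasurable ?_)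
    fun_prop
  · filter_upwards [ae_norm_eq_one hσ] with ξ hξ w hw
    have h1 := one_sub_norm_le (w := w) hξ
    have h2 := hball w hw
    have h3 : ε ≤ ‖ξ - w‖ := by linarith
    rw [norm_mul, norm_div, norm_mul, norm_pow, hξ]
    simp only [Complex.norm_ofNat, mul_one]
    gcongr
  · filter_upwards [ae_norm_eq_one hσ] with ξ hξ w hw
    have h1 := one_sub_norm_le (w := w) hξ
    have h2 := hball w hw
    have h3 : ξ - w ≠ 0 := by
      intro h; rw [h, norm_zero] at h1; linarith
    have h4 : HasDerivAt (fun w ↦ herglotzRieszKernel 0 w ξ) (2 * ξ / (ξ - w) ^ 2) w := by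
      have h5 := ((hasDerivAt_id w).const_add ξ).div ((hasDerivAt_id w).const_sub ξ) h3
      simp only [herglotzRieszKernel_def, sub_zero]
      refine h5.congr_deriv ?_
      simp only [id]
      ring
    exact h4.const_mul (g ξ)

lemma re_herglotzInt {σ : Measure ℂ} (hσ : σ (sphere (0 : ℂ) 1)ᶜ = 0) {g : ℂ → ℝ}
    (hg : Integrable g σ) {w : ℂ} (hw : ‖w‖ < 1) :
    (herglotzInt σ (fun ξ ↦ (g ξ : ℂ)) w).re = ∫ ξ, g ξ * poissonKernel 0 w ξ ∂σ := by
  unfold herglotzInt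
  have h := integral_re (integrable_mul_herglotz hσ hg.ofReal hw)
  simp only [RCLike.re_to_complex] at h
  refine h.symm.trans ?_
  simp [poissonKernel_eq_re_herglotzRieszKernel]

lemma integrable_mul_poisson {σ : Measure ℂ} (hσ : σ (sphere (0 : ℂ) 1)ᶜ = 0) {g : ℂ → ℝ}
    (hg : Integrable g σ) {w : ℂ} (hw : ‖w‖ < 1) :
    Integrable (fun ξ ↦ g ξ * poissonKernel 0 w ξ) σ := by
  have h := (integrable_mul_herglotz hσ hg.ofReal hw).re
  simpa [poissonKernel_eq_re_herglotzRieszKernel] using h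

lemma ofReal_re_herglotzInt_one {σ : Measure ℂ} [IsFiniteMeasure σ]
    (hσ : σ (sphere (0 : ℂ) 1)ᶜ = 0) {w : ℂ} (hw : ‖w‖ < 1) :
    ENNReal.ofReal (herglotzInt σ (fun _ ↦ 1) w).re = poissonInt σ w := by
  have := re_herglotzInt hσ (integrable_const (1 : ℝ)) hw
  rw [poissonInt_eq_ofReal hσ hw]
  simp only [Complex.ofReal_one, one_mul] at this
  rw [this]

lemma re_herglotzInt_one_pos {σ : Measure ℂ} [IsFiniteMeasure σ] (hσ0 : σ ≠ 0)
    (hσ : σ (sphere (0 : ℂ) 1)ᶜ = 0) {w : ℂ} (hw : ‖w‖ < 1) :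
    0 < (herglotzInt σ (fun _ ↦ 1) w).re := by
  rw [← ENNReal.ofReal_pos, ofReal_re_herglotzInt_one hσ hw, poissonInt, pos_iff_ne_zero, Ne,
    lintegral_eq_zero_iff (by have := measurable_poissonKernel w; fun_prop)]
  intro h
  apply hσ0
  rw [← Measure.measure_univ_eq_zero]
  have : ∀ᵐ ξ ∂σ, False := by
    filter_upwards [h, ae_norm_eq_one hσ] with ξ h1 h2
    have := poissonKernel_pos h2 hw
    simp only [Pi.zero_apply, ENNReal.ofReal_eq_zero] at h1
    linarith
  simpa [ae_iff] using this

lemma poissonInt_zero {σ : Measure ℂ} (hσ : σ (sphere (0 : ℂ) 1)ᶜ = 0) :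
    poissonInt σ 0 = σ univ := by
  unfold poissonInt
  rw [← setLIntegral_one, Measure.restrict_univ]
  apply lintegral_congr_ae
  filter_upwards [ae_norm_eq_one hσ] with ξ hξ
  simp [poissonKernel_def, hξ]

lemma herglotzInt_zero {σ : Measure ℂ} (hσ : σ (sphere (0 : ℂ) 1)ᶜ = 0) (g : ℂ → ℂ) :
    herglotzInt σ g 0 = ∫ ξ, g ξ ∂σ := by
  unfold herglotzInt
  apply integral_congr_ae
  filter_upwards [ae_norm_eq_one hσ] with ξ hξ
  have : ξ ≠ 0 := by rintro rfl; simp at hξ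
  simp [herglotzRieszKernel_def, this]

/-- The `L²` bound that replaces a maximal inequality. With `H_g` the Herglotz integral of `g σ` and
`φ = H_g / H_1`, the holomorphic function `S = 2 H_{g²} - H_g² / H_1` satisfies
`|φ|² P_σ ≤ 2 Re S`, so `Re S` is the Poisson integral of a measure `τ`, of mass
`Re S 0 ≤ 2 ∫ g² dσ`. -/
lemma exists_majorant {σ : Measure ℂ} [IsFiniteMeasure σ] (hσ0 : σ ≠ 0)
    (hσ : σ (sphere (0 : ℂ) 1)ᶜ = 0) {g : ℂ → ℝ} (hg : MemLp g 2 σ) :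
    ∃ τ : Measure ℂ, IsFiniteMeasure τ ∧ τ (sphere (0 : ℂ) 1)ᶜ = 0 ∧
      τ univ ≤ 2 * ∫⁻ ξ, ENNReal.ofReal (g ξ ^ 2) ∂σ ∧
      ∀ w : ℂ, ‖w‖ < 1 →
        ENNReal.ofReal (‖herglotzInt σ (fun ξ ↦ (g ξ : ℂ)) w / herglotzInt σ (fun _ ↦ 1) w‖ ^ 2) *
          poissonInt σ w ≤ 2 * poissonInt τ w := by
  have hg1 : Integrable g σ := hg.integrable one_le_two
  have hg2 : Integrable (fun ξ ↦ g ξ ^ 2) σ := hg.integrable_sq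
  set H0 := herglotzInt σ (fun _ ↦ 1) with hH0
  set H1 := herglotzInt σ (fun ξ ↦ (g ξ : ℂ)) with hH1
  set H2 := herglotzInt σ (fun ξ ↦ ((g ξ ^ 2 : ℝ) : ℂ)) with hH2
  set S : ℂ → ℂ := fun w ↦ 2 * H2 w - H1 w ^ 2 / H0 w with hS
  have hH0pos : ∀ w : ℂ, ‖w‖ < 1 → 0 < (H0 w).re := fun w hw ↦ re_herglotzInt_one_pos hσ0 hσ hw
  have hH0ne : ∀ w : ℂ, ‖w‖ < 1 → H0 w ≠ 0 := by
    intro w hw h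
    have := hH0pos w hw
    simp [h] at this
  have hdiff : DifferentiableOn ℂ S (ball 0 1) := by
    have d0 : DifferentiableOn ℂ H0 (ball 0 1) :=
      differentiableOn_herglotzInt hσ (integrable_const _)
    have d1 : DifferentiableOn ℂ H1 (ball 0 1) := differentiableOn_herglotzInt hσ hg1.ofReal
    have d2 : DifferentiableOn ℂ H2 (ball 0 1) := differentiableOn_herglotzInt hσ hg2.ofReal
    exact (d2.const_mul 2).sub ((d1.pow 2).div d0 fun w hw ↦ hH0ne w (by simpa using hw))
  have key : ∀ w : ℂ, ‖w‖ < 1 → ‖H1 w / H0 w‖ ^ 2 * (H0 w).re ≤ 2 * (S w).re := by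
    intro w hw
    set φ := H1 w / H0 w with hφ
    have e1 : H1 w = φ * H0 w := by rw [hφ, div_mul_cancel₀ _ (hH0ne w hw)]
    have eS : S w = 2 * H2 w - φ * φ * H0 w := by
      simp only [hS]
      rw [e1]
      field_simp [hH0ne w hw]
    have r0 : (H0 w).re = ∫ ξ, poissonKernel 0 w ξ ∂σ := by
      have := re_herglotzInt hσ (integrable_const (1 : ℝ)) hw
      simpa using this
    have r1 : (H1 w).re = ∫ ξ, g ξ * poissonKernel 0 w ξ ∂σ := re_herglotzInt hσ hg1 hw
    have r2 : (H2 w).re = ∫ ξ, g ξ ^ 2 * poissonKernel 0 w ξ ∂σ := re_herglotzInt hσ hg2 hw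
    have i0 : Integrable (fun ξ ↦ poissonKernel 0 w ξ) σ := by
      simpa using integrable_mul_poisson hσ (integrable_const (1 : ℝ)) hw
    have i1 := integrable_mul_poisson hσ hg1 hw
    have i2 := integrable_mul_poisson hσ hg2 hw
    have i12 : Integrable (fun ξ ↦ g ξ ^ 2 * poissonKernel 0 w ξ -
        φ.re * (g ξ * poissonKernel 0 w ξ)) σ := i2.sub (i1.const_mul _)
    -- The right-hand side is the Poisson integral of `(g - Re φ / 2)² σ`.
    have hsq : 0 ≤ (H2 w).re - φ.re * (H1 w).re + φ.re ^ 2 / 4 * (H0 w).re := by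
      rw [r0, r1, r2, ← integral_const_mul, ← integral_const_mul,
        ← integral_sub i2 (i1.const_mul _), ← integral_add i12 (i0.const_mul _)]
      apply integral_nonneg_of_ae
      filter_upwards [ae_norm_eq_one hσ] with ξ hξ
      have hp := poissonKernel_nonneg hξ hw
      have e : g ξ ^ 2 * poissonKernel 0 w ξ - φ.re * (g ξ * poissonKernel 0 w ξ) +
          φ.re ^ 2 / 4 * poissonKernel 0 w ξ = (g ξ - φ.re / 2) ^ 2 * poissonKernel 0 w ξ := by
        ring
      simp only [Pi.zero_apply]
      rw [e]
      positivity
    have e1' : (H1 w).re = φ.re * (H0 w).re - φ.im * (H0 w).im := by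
      rw [e1, Complex.mul_re]
    have eS' : (S w).re = 2 * (H2 w).re - ((φ.re * φ.re - φ.im * φ.im) * (H0 w).re -
        (φ.re * φ.im + φ.im * φ.re) * (H0 w).im) := by
      rw [eS]
      simp [Complex.mul_re, Complex.mul_im]
    have en : ‖φ‖ ^ 2 = φ.re * φ.re + φ.im * φ.im := by
      rw [← Complex.normSq_eq_norm_sq, Complex.normSq_apply]
    rw [en, eS']
    rw [e1'] at hsq
    nlinarith [mul_nonneg (sq_nonneg φ.im) (hH0pos w hw).le]
  obtain ⟨τ, hτf, hτs, hτ⟩ := exists_poissonInt_eq hdiff (by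
    intro w hw
    have h1 := key w hw
    have h2 := mul_nonneg (sq_nonneg ‖H1 w / H0 w‖) (hH0pos w hw).le
    linarith)
  refine ⟨τ, hτf, hτs, ?_, ?_⟩
  · rw [← poissonInt_zero hτs, hτ 0 (by simp), ← ofReal_integral_eq_lintegral_ofReal hg2
      (.of_forall fun ξ ↦ sq_nonneg _)]
    have h2 : (2 : ℝ≥0∞) = ENNReal.ofReal 2 := by simp
    rw [h2, ← ENNReal.ofReal_mul (by norm_num)]
    apply ENNReal.ofReal_le_ofReal
    simp only [hS, hH0, hH1, hH2, herglotzInt_zero hσ, integral_complex_ofReal]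
    simp only [integral_const, Complex.real_smul, mul_one]
    rw [← Complex.ofReal_pow, ← Complex.ofReal_div, Complex.sub_re, Complex.ofReal_re]
    simp only [Complex.mul_re, Complex.re_ofNat, Complex.ofReal_re, Complex.im_ofNat, zero_mul,
      sub_zero]
    have : 0 ≤ (∫ ξ, g ξ ∂σ) ^ 2 / σ.real univ := by positivity
    linarith
  · intro w hw
    rw [hτ w hw, ← ofReal_re_herglotzInt_one hσ hw, ← ENNReal.ofReal_mul (by positivity)]
    have h2 : (2 : ℝ≥0∞) = ENNReal.ofReal 2 := by simp
    rw [h2, ← ENNReal.ofReal_mul (by norm_num)]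
    exact ENNReal.ofReal_le_ofReal (key w hw)

lemma tendsto_norm_herglotzInt_one {σ : Measure ℂ} [IsFiniteMeasure σ]
    (hσ : σ (sphere (0 : ℂ) 1)ᶜ = 0) {x : ℂ} (hx : ‖x‖ = 1)
    (h : Tendsto (fun r : ℝ ↦ poissonInt σ (r * x)) (𝓝[<] 1) (𝓝 ⊤)) :
    Tendsto (fun r : ℝ ↦ ‖herglotzInt σ (fun _ ↦ 1) (r * x)‖) (𝓝[<] 1) atTop := by
  rw [Filter.tendsto_atTop]
  intro M
  filter_upwards [h.eventually (lt_mem_nhds (ENNReal.ofReal_lt_top (r := M))),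
    eventually_mem_Ioo] with r hr hr01
  rw [← ofReal_re_herglotzInt_one hσ (norm_radial_lt hx hr01.1 hr01.2)] at hr
  exact (ENNReal.ofReal_lt_ofReal_iff'.1 hr).1.le.trans (Complex.re_le_norm _)

/-- For Lipschitz `g` the numerator of `H_g / H_1 - g x`, namely the Herglotz integral of `(g - g x) σ`,
stays bounded along the radius, while `|H_1| → ∞`. -/
lemma tendsto_ratio_of_lipschitz {σ : Measure ℂ} [IsFiniteMeasure σ]
    (hσ : σ (sphere (0 : ℂ) 1)ᶜ = 0) {x : ℂ} (hx : ‖x‖ = 1)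
    (h : Tendsto (fun r : ℝ ↦ poissonInt σ (r * x)) (𝓝[<] 1) (𝓝 ⊤))
    {g : ℂ → ℝ} {L : ℝ≥0} (hg : LipschitzWith L g) (hgi : Integrable g σ) :
    Tendsto (fun r : ℝ ↦ herglotzInt σ (fun ξ ↦ (g ξ : ℂ)) (r * x) /
      herglotzInt σ (fun _ ↦ 1) (r * x)) (𝓝[<] 1) (𝓝 (g x : ℂ)) := by
  have hnorm := tendsto_norm_herglotzInt_one hσ hx h
  rw [tendsto_iff_norm_sub_tendsto_zero]
  have hlim : Tendsto (fun r : ℝ ↦ (4 * L * σ.real univ) /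
      ‖herglotzInt σ (fun _ ↦ 1) (r * x)‖) (𝓝[<] 1) (𝓝 0) :=
    tendsto_const_nhds.div_atTop hnorm
  refine squeeze_zero' (.of_forall fun r ↦ norm_nonneg _) ?_ hlim
  filter_upwards [eventually_mem_Ioo, hnorm.eventually_gt_atTop 0] with r hr hr0
  have hne : herglotzInt σ (fun _ ↦ 1) (r * x) ≠ 0 := norm_pos_iff.1 hr0
  have hw := norm_radial_lt hx hr.1 hr.2
  rw [div_sub' hne, norm_div]
  gcongr
  unfold herglotzInt
  beta_reduce
  have j1 : Integrable (fun ξ ↦ (g ξ : ℂ) * herglotzRieszKernel 0 (r * x) ξ) σ :=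
    integrable_mul_herglotz hσ hgi.ofReal hw
  have j2 : Integrable (fun ξ ↦ 1 * herglotzRieszKernel 0 (r * x) ξ * (g x : ℂ)) σ :=
    (integrable_mul_herglotz hσ (integrable_const 1) hw).mul_const _
  rw [← integral_mul_const, ← integral_sub j1 j2]
  refine (norm_integral_le_of_norm_le_const (C := 4 * L) ?_).trans (by simp)
  filter_upwards [ae_norm_eq_one hσ] with ξ hξ
  have h0 := norm_sub_pos hξ hw
  have e : (g ξ : ℂ) * herglotzRieszKernel 0 (r * x) ξ -
      1 * herglotzRieszKernel 0 (r * x) ξ * (g x : ℂ) =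
      ((g ξ - g x : ℝ) : ℂ) * herglotzRieszKernel 0 (r * x) ξ := by push_cast; ring
  rw [e, norm_mul, Complex.norm_real]
  calc ‖g ξ - g x‖ * ‖herglotzRieszKernel 0 (r * x) ξ‖
      ≤ (L * ‖ξ - x‖) * (2 / ‖ξ - r * x‖) := by
        gcongr
        · simpa [dist_eq_norm] using hg.dist_le_mul ξ x
        · exact norm_herglotz_le hξ hw
    _ ≤ (L * (2 * ‖ξ - r * x‖)) * (2 / ‖ξ - r * x‖) := by
        gcongr
        exact norm_sub_le_two_mul hx hξ hr.1.le hr.2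
    _ = 4 * L := by field_simp; ring

/-! ### Convergence of the ratio for square-integrable functions -/

lemma exists_lipschitz_approx {σ : Measure ℂ} [IsFiniteMeasure σ] {f : ℂ → ℝ} (hf : MemLp f 2 σ)
    {ε : ℝ} (hε : 0 < ε) :
    ∃ g : ℂ → ℝ, (∃ L, LipschitzWith L g) ∧ MemLp g 2 σ ∧
      ∫⁻ ξ, ENNReal.ofReal ((f ξ - g ξ) ^ 2) ∂σ ≤ ENNReal.ofReal (ε ^ 2) := by
  obtain ⟨g, hg1, hg2, hg3⟩ := hf.exist_eLpNorm_sub_le (by simp) one_le_two hε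
  refine ⟨g, ⟨_, (hg2.lipschitzWith_of_hasCompactSupport hg1 (by simp)).choose_spec⟩,
    hg2.continuous.memLp_of_hasCompactSupport hg1, ?_⟩
  have h := eLpNorm_nnreal_pow_eq_lintegral (f := f - g) (μ := σ) (p := 2) (by norm_num)
  have e : ∫⁻ ξ, ENNReal.ofReal ((f ξ - g ξ) ^ 2) ∂σ = eLpNorm (f - g) 2 σ ^ (2 : ℝ) := by
    refine Eq.trans ?_ h.symm
    refine lintegral_congr fun ξ ↦ ?_
    rw [← sq_abs, ENNReal.ofReal_pow (abs_nonneg _), ← Real.enorm_eq_ofReal_abs]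
    norm_num
  rw [e, ENNReal.ofReal_pow hε.le, ← ENNReal.rpow_two]
  gcongr

lemma herglotzInt_add {σ : Measure ℂ} (hσ : σ (sphere (0 : ℂ) 1)ᶜ = 0) {g h : ℂ → ℂ}
    (hg : Integrable g σ) (hh : Integrable h σ) {w : ℂ} (hw : ‖w‖ < 1) :
    herglotzInt σ (fun ξ ↦ g ξ + h ξ) w = herglotzInt σ g w + herglotzInt σ h w := by
  unfold herglotzInt
  simp only [add_mul]
  exact integral_add (integrable_mul_herglotz hσ hg hw) (integrable_mul_herglotz hσ hh hw)

/-- Square-integrable real case: approximation by Lipschitz functions `g n`, where the error of the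
ratio is controlled by the majorants `τ n` of `f - g n`. Both `dτ n / dσ` and `(f - g n)²` have
summable integrals, hence tend to zero almost everywhere. -/
lemma ae_tendsto_ratio_real {σ : Measure ℂ} [IsFiniteMeasure σ] (hσ0 : σ ≠ 0)
    (hσ : σ (sphere (0 : ℂ) 1)ᶜ = 0) {A : Set ℂ} (hmA : circleHaar A = 0)
    {f : ℂ → ℝ} (hf : MemLp f 2 σ) :
    ∀ᵐ x ∂σ.restrict A, Tendsto (fun r : ℝ ↦ herglotzInt σ (fun ξ ↦ (f ξ : ℂ)) (r * x) /
      herglotzInt σ (fun _ ↦ 1) (r * x)) (𝓝[<] 1) (𝓝 (f x : ℂ)) := by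
  have happ (n : ℕ) := exists_lipschitz_approx hf (ε := (1 / 2) ^ n) (by positivity)
  choose g hgL hgm hgi using happ
  have hmaj (n : ℕ) := exists_majorant hσ0 hσ (hf.sub (hgm n))
  choose τ hτfin hτs hτm hτ using hmaj
  have hdiff (n : ℕ) := ae_eventually_poissonInt_le hσ (hτs n) hmA
  set h : ℕ → ℂ → ℝ≥0∞ := fun n x ↦
    (τ n).rnDeriv σ x + ENNReal.ofReal ((f x - g n x) ^ 2) with hh
  have hmeas (n : ℕ) : AEMeasurable (fun x ↦ ENNReal.ofReal ((f x - g n x) ^ 2)) σ :=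
    ((hf.aestronglyMeasurable.aemeasurable.sub
      (hgm n).aestronglyMeasurable.aemeasurable).pow_const 2).ennreal_ofReal
  have hbound (n : ℕ) : ∫⁻ x, h n x ∂σ ≤ 3 * ENNReal.ofReal ((1 / 4) ^ n) := by
    rw [hh, lintegral_add_left (Measure.measurable_rnDeriv _ _)]
    have e : ENNReal.ofReal (((1 / 2) ^ n) ^ 2) = ENNReal.ofReal ((1 / 4) ^ n) := by
      rw [← pow_mul, mul_comm, pow_mul]; norm_num
    have h1 := hgi n
    rw [e] at h1
    calc _ ≤ 2 * ENNReal.ofReal ((1 / 4) ^ n) + ENNReal.ofReal ((1 / 4) ^ n) := by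
          gcongr
          refine Measure.lintegral_rnDeriv_le.trans ((hτm n).trans ?_)
          gcongr
          exact h1
      _ = _ := by ring
  have hhm (n : ℕ) : AEMeasurable (h n) σ :=
    (Measure.measurable_rnDeriv _ _).aemeasurable.add (hmeas n)
  have hsum : ∀ᵐ x ∂σ, Tendsto (fun n ↦ h n x) atTop (𝓝 0) := by
    have h1 : ∫⁻ x, ∑' n, h n x ∂σ ≠ ⊤ := by
      rw [lintegral_tsum hhm]
      refine ne_top_of_le_ne_top ?_ (ENNReal.tsum_le_tsum hbound)
      rw [ENNReal.tsum_mul_left]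
      refine ENNReal.mul_ne_top (by simp) (Summable.tsum_ofReal_ne_top ?_)
      exact summable_geometric_of_lt_one (by norm_num) (by norm_num)
    filter_upwards [ae_lt_top' (AEMeasurable.tsum hhm) h1] with x hx
    exact ENNReal.tendsto_atTop_zero_of_tsum_ne_top hx.ne
  filter_upwards [ae_tendsto_poissonInt_top hσ hmA, ae_restrict_of_ae hsum, ae_all_iff.2 hdiff,
    ae_restrict_of_ae (ae_norm_eq_one hσ)] with x htop hx0 hxd hx1
  rw [Metric.tendsto_nhds]
  intro ε hε
  obtain ⟨n, hn⟩ := (hx0.eventually (gt_mem_nhds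
    (ENNReal.ofReal_pos.2 (show 0 < (ε / 4) ^ 2 by positivity)))).exists
  have hn1 : (τ n).rnDeriv σ x < ENNReal.ofReal ((ε / 4) ^ 2) := lt_of_le_of_lt le_self_add hn
  have hn2 : |f x - g n x| < ε / 4 := by
    have : ENNReal.ofReal ((f x - g n x) ^ 2) < ENNReal.ofReal ((ε / 4) ^ 2) :=
      lt_of_le_of_lt le_add_self hn
    rw [ENNReal.ofReal_lt_ofReal_iff (by positivity)] at this
    exact abs_lt_of_sq_lt_sq this (by positivity)
  obtain ⟨L, hL⟩ := hgL n
  have hlip := tendsto_ratio_of_lipschitz hσ hx1 htop hL ((hgm n).integrable one_le_two)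
  rw [Metric.tendsto_nhds] at hlip
  filter_upwards [hlip (ε / 4) (by positivity), hxd n _ ENNReal.ofReal_ne_top hn1,
    eventually_mem_Ioo] with r hr1 hr2 hr
  have hw := norm_radial_lt hx1 hr.1 hr.2
  have hpos := re_herglotzInt_one_pos hσ0 hσ hw
  have hP := ofReal_re_herglotzInt_one hσ hw
  have hφ : ‖herglotzInt σ (fun ξ ↦ ((f - g n) ξ : ℂ)) (r * x) /
      herglotzInt σ (fun _ ↦ 1) (r * x)‖ ≤ ε / 2 := by
    have h1 := (hτ n _ hw).trans (mul_le_mul_right hr2 2)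
    rw [← mul_assoc, ← hP] at h1
    rw [ENNReal.mul_le_mul_iff_left (ENNReal.ofReal_pos.2 hpos).ne' ENNReal.ofReal_ne_top,
      show (2 : ℝ≥0∞) = ENNReal.ofReal 2 by simp, ← ENNReal.ofReal_mul (by norm_num),
      ENNReal.ofReal_le_ofReal_iff (by positivity)] at h1
    refine abs_le_of_sq_le_sq' (h1.trans ?_) (by positivity) |>.2
    nlinarith
  have e : herglotzInt σ (fun ξ ↦ (f ξ : ℂ)) (r * x) =
      herglotzInt σ (fun ξ ↦ ((f - g n) ξ : ℂ)) (r * x) +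
        herglotzInt σ (fun ξ ↦ (g n ξ : ℂ)) (r * x) := by
    have j1 : Integrable (fun ξ ↦ ((f - g n) ξ : ℂ)) σ :=
      ((hf.sub (hgm n)).integrable one_le_two).ofReal
    have j2 : Integrable (fun ξ ↦ (g n ξ : ℂ)) σ := ((hgm n).integrable one_le_two).ofReal
    rw [← herglotzInt_add hσ j1 j2 hw]
    simp
  rw [e, add_div]
  rw [dist_eq_norm] at hr1 ⊢
  have hn3 : ‖((f x - g n x : ℝ) : ℂ)‖ < ε / 4 := by rwa [Complex.norm_real]
  set a := herglotzInt σ (fun ξ ↦ ((f - g n) ξ : ℂ)) (r * x) / herglotzInt σ (fun _ ↦ 1) (r * x)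
  set b := herglotzInt σ (fun ξ ↦ (g n ξ : ℂ)) (r * x) / herglotzInt σ (fun _ ↦ 1) (r * x)
  calc ‖a + b - f x‖ = ‖a + (b - g n x) - ((f x - g n x : ℝ) : ℂ)‖ := by
        congr 1; push_cast; ring
    _ ≤ ‖a + (b - g n x)‖ + ‖((f x - g n x : ℝ) : ℂ)‖ := norm_sub_le _ _
    _ ≤ ‖a‖ + ‖b - g n x‖ + ‖((f x - g n x : ℝ) : ℂ)‖ := by gcongr; exact norm_add_le _ _
    _ < ε := by linarith

lemma ae_tendsto_ratio_complex {σ : Measure ℂ} [IsFiniteMeasure σ] (hσ0 : σ ≠ 0)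
    (hσ : σ (sphere (0 : ℂ) 1)ᶜ = 0) {A : Set ℂ} (hmA : circleHaar A = 0)
    {f : ℂ → ℂ} (hf : MemLp f 2 σ) :
    ∀ᵐ x ∂σ.restrict A, Tendsto (fun r : ℝ ↦ herglotzInt σ f (r * x) /
      herglotzInt σ (fun _ ↦ 1) (r * x)) (𝓝[<] 1) (𝓝 (f x)) := by
  have hre : MemLp (fun ξ ↦ (f ξ).re) 2 σ := hf.re
  have him : MemLp (fun ξ ↦ (f ξ).im) 2 σ := hf.im
  filter_upwards [ae_tendsto_ratio_real hσ0 hσ hmA hre, ae_tendsto_ratio_real hσ0 hσ hmA him,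
    ae_restrict_of_ae (ae_norm_eq_one hσ)] with x h1 h2 hx1
  have h3 := h1.add (h2.mul_const I)
  rw [re_add_im] at h3
  refine h3.congr' ?_
  filter_upwards [eventually_mem_Ioo] with r hr
  have hw := norm_radial_lt hx1 hr.1 hr.2
  rw [div_mul_eq_mul_div, ← add_div]
  congr 1
  have j1 : Integrable (fun ξ ↦ ((f ξ).re : ℂ)) σ := (hre.integrable one_le_two).ofReal
  have j2 : Integrable (fun ξ ↦ ((f ξ).im : ℂ)) σ := (him.integrable one_le_two).ofReal
  have e : herglotzInt σ (fun ξ ↦ ((f ξ).im : ℂ)) (r * x) * I =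
      herglotzInt σ (fun ξ ↦ ((f ξ).im : ℂ) * I) (r * x) := by
    unfold herglotzInt
    rw [← integral_mul_const]
    congr 1; ext ξ; ring
  rw [e, ← herglotzInt_add hσ j1 (j2.mul_const I) hw]
  simp only [re_add_im]

/-! ### Integrable functions, and passage to Cauchy transforms -/

lemma herglotzInt_withDensity {σ : Measure ℂ} {g : ℂ → ℝ≥0} (hg : AEMeasurable g σ)
    (h : ℂ → ℂ) (w : ℂ) :
    herglotzInt (σ.withDensity fun ξ ↦ (g ξ : ℝ≥0∞)) h w =
      herglotzInt σ (fun ξ ↦ (g ξ : ℂ) * h ξ) w := by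
  unfold herglotzInt
  rw [integral_withDensity_eq_integral_smul₀ hg]
  congr 1; ext ξ
  rw [NNReal.smul_def, Complex.real_smul]
  ring

/-- Integrable case. Replacing `σ` by `ν = (1 + |f|) σ`, the functions `f` and `1` become the bounded
functions `f / (1 + |f|)` and `1 / (1 + |f|)`, and the ratio for `σ` is the quotient of the two
ratios for `ν`. -/
lemma ae_tendsto_ratio {σ : Measure ℂ} [IsFiniteMeasure σ] (hσ0 : σ ≠ 0)
    (hσ : σ (sphere (0 : ℂ) 1)ᶜ = 0) {A : Set ℂ} (hmA : circleHaar A = 0)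
    {f : ℂ → ℂ} (hf : Integrable f σ) :
    ∀ᵐ x ∂σ.restrict A, Tendsto (fun r : ℝ ↦ herglotzInt σ f (r * x) /
      herglotzInt σ (fun _ ↦ 1) (r * x)) (𝓝[<] 1) (𝓝 (f x)) := by
  set g : ℂ → ℝ≥0 := fun ξ ↦ 1 + ‖f ξ‖₊ with hg
  have hgm : AEMeasurable g σ := hf.aestronglyMeasurable.nnnorm.aemeasurable.const_add 1
  have hg1 (ξ : ℂ) : 1 ≤ (g ξ : ℝ) := by simp [hg]
  have hg0 (ξ : ℂ) : (g ξ : ℂ) ≠ 0 := by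
    have := hg1 ξ
    exact_mod_cast (by positivity : (0 : ℝ) < g ξ).ne'
  set ν := σ.withDensity fun ξ ↦ (g ξ : ℝ≥0∞) with hν
  have hσν : σ ≪ ν := withDensity_absolutelyContinuous' hgm.coe_nnreal_ennreal (by simp [hg])
  have hνσ : ν ≪ σ := withDensity_absolutelyContinuous _ _
  have hfin : IsFiniteMeasure ν := by
    refine isFiniteMeasure_withDensity ?_
    have : Integrable (fun ξ ↦ (1 : ℝ) + ‖f ξ‖) σ := (integrable_const 1).add hf.norm
    have h2 := this.hasFiniteIntegral.ne
    refine ne_of_eq_of_ne (lintegral_congr fun ξ ↦ ?_) h2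
    rw [Real.enorm_eq_ofReal (by positivity), ENNReal.ofReal_add (by norm_num) (by positivity)]
    simp [hg, enorm_eq_nnnorm]
  have hν0 : ν ≠ 0 := by
    rintro h
    apply hσ0
    rw [h] at hσν
    exact Measure.absolutelyContinuous_zero_iff.1 hσν
  have hνs : ν (sphere (0 : ℂ) 1)ᶜ = 0 := hνσ hσ
  have hgc : AEStronglyMeasurable (fun ξ ↦ (g ξ : ℂ)⁻¹) ν := by
    have : AEMeasurable (fun ξ ↦ (g ξ : ℂ)⁻¹) ν := by
      have h1 := hgm.mono_ac hνσ
      have h2 : Measurable (fun t : ℝ≥0 ↦ ((t : ℝ) : ℂ)⁻¹) := by fun_prop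
      exact h2.comp_aemeasurable h1
    exact this.aestronglyMeasurable
  have hnorm (ξ : ℂ) : ‖(g ξ : ℂ)⁻¹‖ = (g ξ : ℝ)⁻¹ := by simp
  have m1 : MemLp (fun ξ ↦ (g ξ : ℂ)⁻¹) 2 ν := by
    refine MemLp.of_bound hgc 1 (.of_forall fun ξ ↦ ?_)
    rw [hnorm]
    exact inv_le_one_of_one_le₀ (hg1 ξ)
  have m2 : MemLp (fun ξ ↦ (g ξ : ℂ)⁻¹ * f ξ) 2 ν := by
    refine MemLp.of_bound (hgc.mul (hf.aestronglyMeasurable.mono_ac hνσ)) 1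
      (.of_forall fun ξ ↦ ?_)
    rw [norm_mul, hnorm, inv_mul_le_iff₀ (by have := hg1 ξ; positivity)]
    simp [hg]
  have e1 (w : ℂ) : herglotzInt ν (fun ξ ↦ (g ξ : ℂ)⁻¹) w = herglotzInt σ (fun _ ↦ 1) w := by
    rw [hν, herglotzInt_withDensity hgm]
    congr 1; ext ξ; exact mul_inv_cancel₀ (hg0 ξ)
  have e2 (w : ℂ) : herglotzInt ν (fun ξ ↦ (g ξ : ℂ)⁻¹ * f ξ) w = herglotzInt σ f w := by
    rw [hν, herglotzInt_withDensity hgm]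
    congr 1; ext ξ; exact mul_inv_cancel_left₀ (hg0 ξ) _
  have hac : σ.restrict A ≪ ν.restrict A := hσν.restrict A
  refine hac.ae_le ?_
  filter_upwards [ae_tendsto_ratio_complex hν0 hνs hmA m1,
    ae_tendsto_ratio_complex hν0 hνs hmA m2,
    ae_restrict_of_ae (ae_norm_eq_one hνs)] with x h1 h2 hx1
  have h3 := h2.div h1 (inv_ne_zero (hg0 x))
  rw [mul_div_cancel_left₀ _ (inv_ne_zero (hg0 x))] at h3
  refine h3.congr' ?_
  filter_upwards [eventually_mem_Ioo] with r hr
  have hpos := re_herglotzInt_one_pos hν0 hνs (norm_radial_lt hx1 hr.1 hr.2)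
  have hne : herglotzInt ν (fun _ ↦ 1) (r * x) ≠ 0 := by
    intro h; rw [h] at hpos; simp at hpos
  rw [Pi.div_apply, div_div_div_cancel_right₀ hne, e1, e2]

/-- On the circle the Herglotz kernel equals `2 / (1 - ξ̄ w) - 1`, so Cauchy transforms and Herglotz
integrals differ by a constant, apart from a factor `2`. -/
lemma integral_cauchy {σ : Measure ℂ} (hσ : σ (sphere (0 : ℂ) 1)ᶜ = 0) {g : ℂ → ℂ}
    (hg : Integrable g σ) {w : ℂ} (hw : ‖w‖ < 1) :
    ∫ ξ, g ξ * (1 - (starRingEnd ℂ) ξ * w)⁻¹ ∂σ = (herglotzInt σ g w + ∫ ξ, g ξ ∂σ) / 2 := by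
  unfold herglotzInt
  rw [← integral_add (integrable_mul_herglotz hσ hg hw) hg, ← integral_div]
  refine integral_congr_ae ?_
  filter_upwards [ae_norm_eq_one hσ] with ξ hξ
  have h0 : ξ ≠ 0 := by rintro rfl; simp at hξ
  have h1 : ξ - w ≠ 0 := norm_pos_iff.1 (norm_sub_pos hξ hw)
  have h2 : (starRingEnd ℂ) ξ = ξ⁻¹ := by
    rw [Complex.inv_def, Complex.normSq_eq_norm_sq, hξ]; simp
  have h3 : 1 - ξ⁻¹ * w = (ξ - w) / ξ := by field_simp
  simp only [herglotzRieszKernel_def, h2, h3, sub_zero]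
  field_simp
  ring

end Poltoratski

/-- **Poltoratski's theorem on nontangential boundary values.**
Let `σ` be a nonzero finite positive Borel measure on the unit circle and let
`f ∈ L¹(σ)`.  Then for `σ_s`-almost every `z ∈ 𝕋` (where `σ_s` is the singular
part of `σ` with respect to normalized Lebesgue measure `m` on `𝕋`),
`𝒦_{fσ}(rz)/𝒦_σ(rz) → f(z)` as `r → 1⁻`. -/
theorem poltoratski_nontangential_boundary_values
    (σ : Measure ℂ) [IsFiniteMeasure σ] (hσ_ne : σ ≠ 0)
    (hσ_supp : σ (Metric.sphere (0 : ℂ) 1)ᶜ = 0)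
    (f : ℂ → ℂ) (hf : Integrable f σ) :
    ∀ᵐ z ∂(σ.singularPart circleHaar),
      Tendsto
        (fun r : ℝ =>
          (∫ ξ, f ξ * (1 - (starRingEnd ℂ) ξ * ((r : ℂ) * z))⁻¹ ∂σ) /
            (∫ ξ, (1 - (starRingEnd ℂ) ξ * ((r : ℂ) * z))⁻¹ ∂σ))
        (nhdsWithin 1 (Set.Iio 1)) (nhds (f z)) := by
  obtain ⟨B, hB, hB1, hB2⟩ := Measure.mutuallySingular_singularPart σ circleHaar
  -- The singular part is carried by the `circleHaar`-null set `Bᶜ` and is dominated by `σ` there.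
  have hle : σ.singularPart circleHaar ≤ σ.restrict Bᶜ := by
    have h1 : (σ.singularPart circleHaar).restrict Bᶜ = σ.singularPart circleHaar :=
      Measure.restrict_eq_self_of_ae_mem (by
        rw [ae_iff]; simpa using hB1)
    rw [← h1]
    exact Measure.restrict_mono le_rfl (Measure.singularPart_le _ _)
  refine (Measure.absolutelyContinuous_of_le hle).ae_le ?_
  filter_upwards [Poltoratski.ae_tendsto_ratio hσ_ne hσ_supp hB2 hf,
    Poltoratski.ae_tendsto_poissonInt_top hσ_supp hB2,
    ae_restrict_of_ae (Poltoratski.ae_norm_eq_one hσ_supp)] with z h1 htop hz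
  have hnorm := Poltoratski.tendsto_norm_herglotzInt_one hσ_supp hz htop
  have hinv : Tendsto (fun r : ℝ ↦ (Poltoratski.herglotzInt σ (fun _ ↦ 1) (r * z))⁻¹)
      (nhdsWithin 1 (Set.Iio 1)) (nhds 0) := by
    rw [tendsto_zero_iff_norm_tendsto_zero]
    simp only [norm_inv]
    exact hnorm.inv_tendsto_atTop
  have hnum := h1.add (hinv.const_mul (∫ ξ, f ξ ∂σ))
  have hden := (hinv.const_mul (∫ _, (1 : ℂ) ∂σ)).const_add 1
  have hlim := hnum.div hden (by simp)
  simp only [mul_zero, add_zero, div_one] at hlim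
  refine hlim.congr' ?_
  filter_upwards [Poltoratski.eventually_mem_Ioo] with r hr
  have hw := Poltoratski.norm_radial_lt hz hr.1 hr.2
  have hpos := Poltoratski.re_herglotzInt_one_pos hσ_ne hσ_supp hw
  have hne : Poltoratski.herglotzInt σ (fun _ ↦ 1) (r * z) ≠ 0 := by
    intro h; rw [h] at hpos; simp at hpos
  have hK := Poltoratski.integral_cauchy hσ_supp (integrable_const (1 : ℂ)) hw
  simp only [one_mul] at hK
  rw [Pi.div_apply, Poltoratski.integral_cauchy hσ_supp hf hw, hK,
    div_div_div_cancel_right₀ two_ne_zero]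
  set H := Poltoratski.herglotzInt σ (fun _ ↦ 1) (r * z)
  rw [← mul_div_mul_right _ _ hne]
  congr 1 <;> field_simp
end
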